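/- arXiv:2202.05232 — 3 statements merged into one kernel-verified Lean document; each statement's English description precedes it below -/
import Mathlib

section
/- Suppose firms have linear preferences over workers and, for each firm f, the upper-bound constraint family ℋ_f is an intersecting family of subsets of W with integer quotas λ̄ given by a function g_f that is submodular on intersecting pairs of ℋ_f, i.e., λ̄_D = g_f(D) for all D ∈ ℋ_f (a polymatroid constraint structure). Then a stable arrangement exists. -/
/-!
Counting with the disjoint maximal tight sets shows that the feasible sets of a polymatroid
constraint structure satisfy the augmentation axiom, so they are the independent sets of a matroid.
Under matroid constraints, linear preferences have the gross substitutes property: when prices rise,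
a firm need not drop a worker whose price did not change. Hence an ascending auction, in which
firms in turn take a whole demanded set and outbid the current holders by a fixed increment,
maintains the invariant that every firm's holding extends to a demanded set. It ends in a
competitive equilibrium up to an error proportional to the increment; as there are finitely many
assignments and prices are bounded, an exact equilibrium exists by compactness. Paying each worker
the price minus the worker's own match value turns it into a stable arrangement.
-/

open Finset

namespace TwoSidedMatching

variable {W F : Type*} [Fintype W] [DecidableEq W] [Fintype F] [DecidableEq F]

/-- The set of workers assigned to firm `f` under assignment `X`. -/
def assigned (X : W → Option F) (f : F) : Finset W :=
  Finset.univ.filter fun w => X w = some f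

/-- Payoff of worker `w`: `a w f + s w f` if matched to `f`, and `0` if unmatched. -/
def workerPayoff (a s : W → F → ℝ) (X : W → Option F) (w : W) : ℝ :=
  match X w with
  | some f => a w f + s w f
  | none => 0

/-- Payoff of firm `f`: value of its assigned set minus total salaries paid. -/
def firmPayoff (b : Finset W → F → ℝ) (s : W → F → ℝ) (X : W → Option F) (f : F) : ℝ :=
  b (assigned X f) f - ∑ w ∈ assigned X f, s w f

/-- An assignment is feasible if each firm's assigned set is feasible or empty. -/
def Feasible (𝒯 : F → Set (Finset W)) (X : W → Option F) : Prop :=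
  ∀ f : F, assigned X f ∈ 𝒯 f ∨ assigned X f = ∅

/-- r-feasibility: each firm's assigned set is feasible. -/
def RFeasible (𝒯 : F → Set (Finset W)) (X : W → Option F) : Prop :=
  ∀ f : F, assigned X f ∈ 𝒯 f

/-- A blocking coalition: a firm `f`, a feasible set `D ∈ 𝒯 f`, and salaries `r`
making all members of `D ∪ {f}` weakly better off and at least one strictly better off. -/
def Blocks (a : W → F → ℝ) (b : Finset W → F → ℝ) (𝒯 : F → Set (Finset W))
    (s : W → F → ℝ) (X : W → Option F) : Prop :=
  ∃ f : F, ∃ D ∈ 𝒯 f, ∃ r : W → ℝ,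
    (∀ w ∈ D, a w f + r w ≥ workerPayoff a s X w) ∧
    (b D f - ∑ w ∈ D, r w ≥ firmPayoff b s X f) ∧
    ((∃ w ∈ D, a w f + r w > workerPayoff a s X w) ∨
      b D f - ∑ w ∈ D, r w > firmPayoff b s X f)

/-- Stability: feasible, individually rational for workers and firms, and no blocking coalition. -/
def Stable (a : W → F → ℝ) (b : Finset W → F → ℝ) (𝒯 : F → Set (Finset W))
    (s : W → F → ℝ) (X : W → Option F) : Prop :=
  Feasible 𝒯 X ∧ (∀ w, 0 ≤ workerPayoff a s X w) ∧
    (∀ f, 0 ≤ firmPayoff b s X f) ∧ ¬ Blocks a b 𝒯 s X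

/-- r-stability: r-feasible, individually rational for workers, and no blocking coalition. -/
def RStable (a : W → F → ℝ) (b : Finset W → F → ℝ) (𝒯 : F → Set (Finset W))
    (s : W → F → ℝ) (X : W → Option F) : Prop :=
  RFeasible 𝒯 X ∧ (∀ w, 0 ≤ workerPayoff a s X w) ∧ ¬ Blocks a b 𝒯 s X

/-- Total match value of an assignment. -/
def totalValue (a : W → F → ℝ) (b : Finset W → F → ℝ) (X : W → Option F) : ℝ :=
  (∑ w : W, match X w with
    | some f => a w f
    | none => 0) +
  ∑ f : F, b (assigned X f) f

/-- Two sets are intersecting if their intersection and both differences are nonempty. -/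
def IntersectingSets (A B : Finset W) : Prop :=
  (A ∩ B).Nonempty ∧ (A \ B).Nonempty ∧ (B \ A).Nonempty

/-- An intersecting family: does not contain `∅` and is closed under
intersections and unions of intersecting members. -/
def IntersectingFamily (ℋ : Set (Finset W)) : Prop :=
  ∅ ∉ ℋ ∧ ∀ A ∈ ℋ, ∀ B ∈ ℋ, IntersectingSets A B → A ∩ B ∈ ℋ ∧ A ∪ B ∈ ℋ

/-- Submodularity on intersecting pairs of a family. -/
def SubmodularOnIntersecting (ℋ : Set (Finset W)) (g : Finset W → ℤ) : Prop :=
  ∀ A ∈ ℋ, ∀ B ∈ ℋ, IntersectingSets A B → g (A ∪ B) + g (A ∩ B) ≤ g A + g B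

/-- Supermodularity on intersecting pairs of a family. -/
def SupermodularOnIntersecting (ℋ : Set (Finset W)) (g : Finset W → ℤ) : Prop :=
  ∀ A ∈ ℋ, ∀ B ∈ ℋ, IntersectingSets A B → g A + g B ≤ g (A ∪ B) + g (A ∩ B)

/-- A hierarchy: `∅` is not a member and any two members are nested or disjoint. -/
def Hierarchy (ℋ : Set (Finset W)) : Prop :=
  ∅ ∉ ℋ ∧ ∀ A ∈ ℋ, ∀ B ∈ ℋ, A ⊆ B ∨ B ⊆ A ∨ A ∩ B = ∅

/-- Feasible sets under upper-bound quotas: `|D ∩ D'| ≤ lam D'` for every `D' ∈ ℋ`. -/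
def upperSets (ℋ : Set (Finset W)) (lam : Finset W → ℤ) : Set (Finset W) :=
  {D | ∀ D' ∈ ℋ, ((D ∩ D').card : ℤ) ≤ lam D'}

/-- Feasible sets under lower and upper quotas: `lo D' ≤ |D ∩ D'| ≤ hi D'` for `D' ∈ ℋ`. -/
def quotaSets (ℋ : Set (Finset W)) (lo hi : Finset W → ℤ) : Set (Finset W) :=
  {D | ∀ D' ∈ ℋ, lo D' ≤ ((D ∩ D').card : ℤ) ∧ ((D ∩ D').card : ℤ) ≤ hi D'}

/-- Feasibility for the matching LP with upper-bound constraints. -/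
def LPFeasible (ℋ : F → Set (Finset W)) (lam : F → Finset W → ℤ) (x : W → F → ℝ) : Prop :=
  (∀ w f, 0 ≤ x w f) ∧ (∀ w, ∑ f : F, x w f ≤ 1) ∧
    ∀ f : F, ∀ D ∈ ℋ f, ∑ w ∈ D, x w f ≤ (lam f D : ℝ)

/-- Feasibility for the matching LP with lower and upper bound constraints. -/
def LPLBFeasible (ℋ : F → Set (Finset W)) (lo hi : F → Finset W → ℤ) (x : W → F → ℝ) : Prop :=
  (∀ w f, 0 ≤ x w f) ∧ (∀ w, ∑ f : F, x w f ≤ 1) ∧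
    ∀ f : F, ∀ D ∈ ℋ f, (lo f D : ℝ) ≤ ∑ w ∈ D, x w f ∧ ∑ w ∈ D, x w f ≤ (hi f D : ℝ)

/-- The LP objective: total match value of a fractional assignment. -/
def LPobj (α : W → F → ℝ) (x : W → F → ℝ) : ℝ :=
  ∑ w : W, ∑ f : F, α w f * x w f

section TightSets

variable {V : Type*} [DecidableEq V] {ℋ : Set (Finset V)} {g : Finset V → ℤ} {I J A B : Finset V}

/-- The tight sets of a feasible set `I` are the members of `ℋ` whose quota `I` exhausts; they are
what prevents `I` from being enlarged. -/
def IsTight (ℋ : Set (Finset V)) (g : Finset V → ℤ) (I A : Finset V) : Prop :=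
  A ∈ ℋ ∧ (#(I ∩ A) : ℤ) = g A

theorem IsTight.union (hfam : IntersectingFamily ℋ) (hsub : SubmodularOnIntersecting ℋ g)
    (hI : I ∈ upperSets ℋ g) (hA : IsTight ℋ g I A) (hB : IsTight ℋ g I B)
    (hAB : (A ∩ B).Nonempty) : IsTight ℋ g I (A ∪ B) := by
  by_cases hle : A ⊆ B
  · rwa [union_eq_right.2 hle]
  by_cases hge : B ⊆ A
  · rwa [union_eq_left.2 hge]
  have hint : IntersectingSets A B := ⟨hAB, sdiff_nonempty.2 hle, sdiff_nonempty.2 hge⟩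
  obtain ⟨hinter, hunion⟩ := hfam.2 A hA.1 B hB.1 hint
  have hmodular : #(I ∩ (A ∪ B)) + #(I ∩ (A ∩ B)) = #(I ∩ A) + #(I ∩ B) := by
    rw [inter_union_distrib_left, inter_inter_distrib_left, card_union_add_card_inter]
  have hsubmodular := hsub A hA.1 B hB.1 hint
  have hinter_le := hI _ hinter
  have hunion_le := hI _ hunion
  have hA_eq := hA.2
  have hB_eq := hB.2
  exact ⟨hunion, by omega⟩

theorem pairwiseDisjoint_maximal_isTight (hfam : IntersectingFamily ℋ)
    (hsub : SubmodularOnIntersecting ℋ g) (hI : I ∈ upperSets ℋ g) :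
    {A | Maximal (IsTight ℋ g I) A}.PairwiseDisjoint id := by
  intro A hA B hB hne
  by_contra hAB
  have hunion := hA.prop.union hfam hsub hI hB.prop (not_disjoint_iff_nonempty_inter.1 hAB)
  exact hne ((hA.eq_of_le hunion subset_union_left).trans
    (hB.eq_of_le hunion subset_union_right).symm)

theorem exists_isTight_of_insert_notMem_upperSets {e : V} (hI : I ∈ upperSets ℋ g)
    (he : insert e I ∉ upperSets ℋ g) : ∃ A, IsTight ℋ g I A ∧ e ∈ A := by
  simp only [upperSets, Set.mem_ofPred_eq, not_forall, not_le] at he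
  obtain ⟨A, hA, hlt⟩ := he
  have hle := hI A hA
  have heA : e ∈ A := by
    by_contra heA
    rw [insert_inter_of_notMem heA] at hlt
    omega
  have hcard : #(insert e I ∩ A) ≤ #(I ∩ A) + 1 := by
    rw [insert_inter_of_mem heA]
    exact card_insert_le _ _
  exact ⟨A, ⟨hA, by omega⟩, heA⟩

theorem card_le_card_of_sdiff_subset_biUnion {𝓜 : Finset (Finset V)}
    (hdisj : (𝓜 : Set (Finset V)).PairwiseDisjoint id) (hle : ∀ A ∈ 𝓜, #(J ∩ A) ≤ #(I ∩ A))
    (hcover : J \ I ⊆ 𝓜.biUnion id) : #J ≤ #I := by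
  have hcard (K : Finset V) : #(K ∩ 𝓜.biUnion id) = ∑ A ∈ 𝓜, #(K ∩ A) := by
    rw [inter_biUnion, card_biUnion fun A hA B hB hne =>
      (hdisj hA hB hne).mono inter_subset_right inter_subset_right]
    rfl
  have hinside : #(J ∩ 𝓜.biUnion id) ≤ #(I ∩ 𝓜.biUnion id) := by
    simpa only [hcard] using sum_le_sum hle
  have houtside : #(J \ 𝓜.biUnion id) ≤ #(I \ 𝓜.biUnion id) := by
    refine card_le_card fun e he => ?_
    rw [mem_sdiff] at he ⊢
    exact ⟨by_contra fun heI => he.2 (hcover (mem_sdiff.2 ⟨he.1, heI⟩)), he.2⟩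
  rw [← card_inter_add_card_sdiff J (𝓜.biUnion id), ← card_inter_add_card_sdiff I (𝓜.biUnion id)]
  exact add_le_add hinside houtside

theorem exists_insert_mem_upperSets [Finite V] (hfam : IntersectingFamily ℋ)
    (hsub : SubmodularOnIntersecting ℋ g) (hI : I ∈ upperSets ℋ g) (hJ : J ∈ upperSets ℋ g)
    (hIJ : #I < #J) : ∃ e ∈ J, e ∉ I ∧ insert e I ∈ upperSets ℋ g := by
  by_contra! hmax
  let 𝓜 := (Set.toFinite {A | Maximal (IsTight ℋ g I) A}).toFinset
  have mem_𝓜 {A} : A ∈ 𝓜 ↔ Maximal (IsTight ℋ g I) A := by simp [𝓜]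
  refine hIJ.not_ge (card_le_card_of_sdiff_subset_biUnion (𝓜 := 𝓜) ?_ (fun A hA => ?_) ?_)
  · simpa [𝓜] using pairwiseDisjoint_maximal_isTight hfam hsub hI
  · have htight := (mem_𝓜.1 hA).prop
    have hle := hJ A htight.1
    rwa [← htight.2, Nat.cast_le] at hle
  · intro e he
    obtain ⟨heJ, heI⟩ := mem_sdiff.1 he
    obtain ⟨A, hA, heA⟩ := exists_isTight_of_insert_notMem_upperSets hI (hmax e heJ heI)
    obtain ⟨B, hAB, hB⟩ := (Set.toFinite {A | IsTight ℋ g I A}).exists_le_maximal hA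
    exact mem_biUnion.2 ⟨B, mem_𝓜.2 hB, hAB heA⟩

theorem isLowerSet_upperSets (ℋ : Set (Finset V)) (g : Finset V → ℤ) :
    IsLowerSet (upperSets ℋ g) := fun _ _ hIJ hJ D hD =>
  (Nat.cast_le.2 (card_le_card (inter_subset_inter_right hIJ))).trans (hJ D hD)

theorem exists_matroid_indep_iff_mem_upperSets [Finite V] (hpos : ∀ D ∈ ℋ, 0 ≤ g D)
    (hfam : IntersectingFamily ℋ) (hsub : SubmodularOnIntersecting ℋ g) :
    ∃ M : Matroid V, ∀ D : Finset V, M.Indep ↑D ↔ D ∈ upperSets ℋ g := by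
  have hempty : ∅ ∈ upperSets ℋ g := fun D hD => by simpa using hpos D hD
  have hsubset ⦃I J⦄ (hJ : J ∈ upperSets ℋ g) (hIJ : I ⊆ J) : I ∈ upperSets ℋ g :=
    isLowerSet_upperSets ℋ g hIJ hJ
  have hinsert ⦃I J⦄ (hI : I ∈ upperSets ℋ g) (hJ : J ∈ upperSets ℋ g) (hIJ : #I < #J) :=
    exists_insert_mem_upperSets hfam hsub hI hJ hIJ
  have hground ⦃I⦄ (_ : I ∈ upperSets ℋ g) : (I : Set V) ⊆ Set.univ := Set.subset_univ _
  exact ⟨(IndepMatroid.ofFinset Set.univ _ hempty hsubset hinsert hground).matroid,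
    fun _ => IndepMatroid.ofFinset_indep Set.univ _ hempty hsubset hinsert hground⟩

end TightSets

section MaxWeight

variable {V R : Type*}

theorem exists_symm_exchange_of_indep {M : Matroid V} {I J : Set V} {e : V} (hI : M.Indep I)
    (hJ : M.Indep J) (heI : e ∈ I) (heJ : e ∉ J) (hdep : ¬ M.Indep (insert e J)) :
    ∃ t ∈ J, t ∉ I ∧ M.Indep (insert t (I \ {e})) ∧ M.Indep (insert e (J \ {t})) := by
  have hecl : e ∈ M.closure J := by
    by_contra hecl
    exact hdep ((hJ.notMem_closure_iff_of_notMem heJ (hI.subset_ground heI)).1 hecl)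
  have hC := hJ.fundCircuit_isCircuit hecl heJ
  obtain ⟨t, ⟨htC, hte⟩, htcl⟩ : ∃ t ∈ M.fundCircuit e J \ {e}, t ∉ M.closure (I \ {e}) := by
    -- Otherwise `e`, being spanned by the rest of its circuit, would be spanned by `I \ {e}`.
    by_contra! hspan
    exact hI.notMem_closure_sdiff_of_mem heI (M.closure_subset_closure_of_subset_closure hspan
      (hC.mem_closure_sdiff_singleton_of_mem (M.mem_fundCircuit e J)))
  rw [(hI.sdiff {e}).notMem_closure_iff (hC.subset_ground htC)] at htcl
  refine ⟨t, (M.fundCircuit_subset_insert e J htC).resolve_left hte,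
    fun htI => htcl.2 ⟨htI, hte⟩, htcl.1, ?_⟩
  rw [Set.insert_sdiff_singleton_comm (Ne.symm hte)]
  exact (hJ.mem_fundCircuit_iff hecl heJ).1 htC

variable [AddCommMonoid R] [LinearOrder R]

/-- `D` is a maximum-weight independent set of `M` for the weights `q`. With `q` the match values
minus the prices, this says that a firm with feasible sets `M.Indep` demands `D`. -/
structure IsMaxWeight (M : Matroid V) (q : V → R) (D : Finset V) : Prop where
  indep : M.Indep ↑D
  sum_le : ∀ ⦃D' : Finset V⦄, M.Indep ↑D' → ∑ w ∈ D', q w ≤ ∑ w ∈ D, q w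

variable {M : Matroid V} {q q' : V → R} {D E S : Finset V} {s t : V}

theorem exists_isMaxWeight [Finite V] (M : Matroid V) (q : V → R) : ∃ D, IsMaxWeight M q D := by
  obtain ⟨D, hD, hmax⟩ := (Set.toFinite {D : Finset V | M.Indep ↑D}).exists_maximalFor
    (fun D => ∑ w ∈ D, q w) _ ⟨∅, by simp⟩
  exact ⟨D, hD, fun D' hD' => (le_total _ _).elim id (hmax hD')⟩

namespace IsMaxWeight

theorem of_sum_le (hD : IsMaxWeight M q D) (hE : M.Indep ↑E)
    (hle : ∑ w ∈ D, q w ≤ ∑ w ∈ E, q w) : IsMaxWeight M q E :=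
  ⟨hE, fun _ hD' => (hD.sum_le hD').trans hle⟩

variable [IsOrderedCancelAddMonoid R]

theorem nonneg (hD : IsMaxWeight M q D) (hs : s ∈ D) : 0 ≤ q s := by
  classical
  have hle := hD.sum_le (hD.indep.subset (coe_subset.2 (erase_subset s D)))
  rwa [← add_sum_erase D q hs, le_add_iff_nonneg_left] at hle

section Exchange

variable [DecidableEq V]

theorem insert_of_nonneg (hD : IsMaxWeight M q D) (hs : s ∉ D) (hq : 0 ≤ q s)
    (hindep : M.Indep ↑(insert s D)) : IsMaxWeight M q (insert s D) :=
  hD.of_sum_le hindep (by simpa only [sum_insert hs] using le_add_of_nonneg_left hq)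

theorem le_of_indep_insert_erase (hD : IsMaxWeight M q D) (hs : s ∈ D) (ht : t ∉ D)
    (hindep : M.Indep ↑(insert t (D.erase s))) : q t ≤ q s := by
  have hle := hD.sum_le hindep
  rwa [sum_insert (fun h => ht (mem_of_mem_erase h)), ← add_sum_erase D q hs,
    add_le_add_iff_right] at hle

theorem insert_erase_of_le (hD : IsMaxWeight M q D) (hs : s ∉ D) (ht : t ∈ D) (hle : q t ≤ q s)
    (hindep : M.Indep ↑(insert s (D.erase t))) : IsMaxWeight M q (insert s (D.erase t)) := by
  refine hD.of_sum_le hindep ?_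
  rw [sum_insert (fun h => hs (mem_of_mem_erase h)), ← add_sum_erase D q ht]
  exact add_le_add_left hle _

theorem exists_insert_inter_subset (hD : IsMaxWeight M q D) (hE : IsMaxWeight M q' E)
    (hle : q' ≤ q) (hsD : s ∈ D) (hq : q' s = q s) :
    ∃ E', insert s (E ∩ D) ⊆ E' ∧ IsMaxWeight M q' E' := by
  by_cases hsE : s ∈ E
  · exact ⟨E, insert_subset hsE inter_subset_left, hE⟩
  by_cases hindep : M.Indep ↑(insert s E)
  · exact ⟨insert s E, insert_subset_insert s inter_subset_left,
      hE.insert_of_nonneg hsE ((hD.nonneg hsD).trans_eq hq.symm) hindep⟩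
  obtain ⟨t, htE, htD, hDt, hEs⟩ :=
    exists_symm_exchange_of_indep hD.indep hE.indep hsD hsE (by rwa [← coe_insert])
  have hts : q' t ≤ q' s := calc
    q' t ≤ q t := hle t
    _ ≤ q s := hD.le_of_indep_insert_erase hsD htD (by simpa using hDt)
    _ = q' s := hq.symm
  refine ⟨insert s (E.erase t), insert_subset_insert s fun w hw => ?_,
    hE.insert_erase_of_le hsE htE hts (by simpa using hEs)⟩
  obtain ⟨hwE, hwD⟩ := mem_inter.1 hw
  exact mem_erase.2 ⟨fun hwt => htD (hwt ▸ hwD), hwE⟩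

end Exchange

/-- This is the gross substitutes property of matroid demand. -/
theorem exists_superset_of_le [Finite V] (hD : IsMaxWeight M q D) (hle : q' ≤ q) (hSD : S ⊆ D)
    (hq : ∀ w ∈ S, q' w = q w) : ∃ E, S ⊆ E ∧ IsMaxWeight M q' E := by
  classical
  induction S using Finset.induction_on with
  | empty => simpa using exists_isMaxWeight M q'
  | insert s S _ ih =>
    obtain ⟨hsD, hSD⟩ := insert_subset_iff.1 hSD
    obtain ⟨E, hSE, hE⟩ := ih hSD fun w hw => hq w (mem_insert_of_mem hw)
    obtain ⟨E', hE', hmax⟩ :=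
      hD.exists_insert_inter_subset hE hle hsD (hq s (mem_insert_self s S))
    exact ⟨E', (insert_subset_insert s (subset_inter hSE hSD)).trans hE', hmax⟩

end IsMaxWeight

end MaxWeight

section Equilibrium

variable {W F : Type*} [Fintype W] [DecidableEq F]

@[simp]
theorem mem_assigned {X : W → Option F} {f : F} {w : W} : w ∈ assigned X f ↔ X w = some f := by
  simp [assigned]

/-- A competitive equilibrium with one price per worker, in which each firm's assigned set is
optimal among its feasible sets up to an error `ε`. Here `v D f` is the joint value of the match
between `D` and `f`, including what the workers get from it. -/
structure IsApproxEquilibrium (𝒯 : F → Set (Finset W)) (v : Finset W → F → ℝ) (ε : ℝ)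
    (X : W → Option F) (p : W → ℝ) : Prop where
  rfeasible : RFeasible 𝒯 X
  price_nonneg : ∀ w, 0 ≤ p w
  price_eq_zero : ∀ w, X w = none → p w = 0
  le_add : ∀ f, ∀ D ∈ 𝒯 f,
    v D f - ∑ w ∈ D, p w ≤ v (assigned X f) f - ∑ w ∈ assigned X f, p w + ε

variable {𝒯 : F → Set (Finset W)} {v : Finset W → F → ℝ} {ε δ : ℝ} {X : W → Option F} {p : W → ℝ}

theorem IsApproxEquilibrium.mono (h : IsApproxEquilibrium 𝒯 v ε X p) (hεδ : ε ≤ δ) :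
    IsApproxEquilibrium 𝒯 v δ X p where
  __ := h
  le_add f D hD := (h.le_add f D hD).trans (by gcongr)

theorem isClosed_setOf_isApproxEquilibrium (𝒯 : F → Set (Finset W)) (v : Finset W → F → ℝ) (ε : ℝ)
    (X : W → Option F) : IsClosed {p | IsApproxEquilibrium 𝒯 v ε X p} := by
  have hset : {p | IsApproxEquilibrium 𝒯 v ε X p} =
      {p | RFeasible 𝒯 X ∧ (∀ w, 0 ≤ p w) ∧ (∀ w, X w = none → p w = 0) ∧ ∀ f, ∀ D ∈ 𝒯 f,
        v D f - ∑ w ∈ D, p w ≤ v (assigned X f) f - ∑ w ∈ assigned X f, p w + ε} :=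
    Set.ext fun _ => ⟨fun ⟨hX, h0, hfree, hle⟩ => ⟨hX, h0, hfree, hle⟩,
      fun ⟨hX, h0, hfree, hle⟩ => ⟨hX, h0, hfree, hle⟩⟩
  rw [hset]
  simp only [Set.ofPred_and, Set.ofPred_forall]
  refine isClosed_const.inter (.inter ?_ (.inter ?_ ?_))
  · exact isClosed_iInter fun w => isClosed_le continuous_const (continuous_apply w)
  · exact isClosed_iInter fun w => isClosed_iInter fun _ =>
      isClosed_eq (continuous_apply w) continuous_const
  · exact isClosed_iInter fun f => isClosed_iInter fun D => isClosed_iInter fun _ =>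
      isClosed_le (by fun_prop) (by fun_prop)

theorem isCompact_setOf_isApproxEquilibrium (𝒯 : F → Set (Finset W)) (v : Finset W → F → ℝ)
    (ε : ℝ) (X : W → Option F) (K : ℝ) :
    IsCompact {p | IsApproxEquilibrium 𝒯 v ε X p ∧ ∀ w, p w ≤ K} := by
  refine (isCompact_Icc (a := (0 : W → ℝ)) (b := fun _ => K)).of_isClosed_subset ?_
    fun p hp => ⟨hp.1.price_nonneg, hp.2⟩
  exact (isClosed_setOf_isApproxEquilibrium 𝒯 v ε X).inter (isClosed_Iic (a := fun _ => K))

theorem exists_isApproxEquilibrium_zero [Finite F] (K : ℝ)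
    (h : ∀ ε > 0, ∃ X p, IsApproxEquilibrium 𝒯 v ε X p ∧ ∀ w, p w ≤ K) :
    ∃ X p, IsApproxEquilibrium 𝒯 v 0 X p := by
  let P (X : W → Option F) (ε : ℝ) : Set (W → ℝ) :=
    {p | IsApproxEquilibrium 𝒯 v ε X p ∧ ∀ w, p w ≤ K}
  have hP_mono (X) : Monotone (P X) := fun _ _ hle _ hp => ⟨hp.1.mono hle, hp.2⟩
  obtain ⟨X, hX⟩ : ∃ X, ∀ ε > 0, (P X ε).Nonempty := by
    by_contra! hempty
    choose δ hδ hPδ using hempty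
    obtain ⟨Y, hY⟩ := Finite.exists_min δ
    obtain ⟨X, p, hp⟩ := h (δ Y) (hδ Y)
    exact (hPδ X).subset (hP_mono X (hY X) hp)
  obtain ⟨p, hp⟩ := IsCompact.nonempty_iInter_of_directed_nonempty_isCompact_isClosed
    (fun ε : Set.Ioi (0 : ℝ) => P X ε)
    (directed_of_isDirected_ge fun _ _ hle => hP_mono X hle)
    (fun ε => hX ε ε.2) (fun ε => isCompact_setOf_isApproxEquilibrium 𝒯 v ε X K)
    fun ε => (isCompact_setOf_isApproxEquilibrium 𝒯 v ε X K).isClosed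
  have hp' : ∀ ε > 0, IsApproxEquilibrium 𝒯 v ε X p := fun ε hε => (Set.mem_iInter.1 hp ⟨ε, hε⟩).1
  refine ⟨X, p, { hp' 1 one_pos with le_add := fun f D hD => ?_ }⟩
  rw [add_zero]
  exact le_of_forall_pos_le_add fun ε hε => (hp' ε hε).le_add f D hD

theorem stable_of_isApproxEquilibrium_zero {a : W → F → ℝ} {b : Finset W → F → ℝ}
    (h : IsApproxEquilibrium 𝒯 (fun D f => ∑ w ∈ D, a w f + b D f) 0 X p)
    (h𝒯 : ∀ f, ∅ ∈ 𝒯 f) (hb : ∀ f, 0 ≤ b ∅ f) :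
    Stable a b 𝒯 (fun w f => p w - a w f) X := by
  have hworker (w) : workerPayoff a (fun w f => p w - a w f) X w = p w := by
    rcases hX : X w with _ | f <;> simp [workerPayoff, hX, h.price_eq_zero]
  have hfirm (f) : firmPayoff b (fun w f => p w - a w f) X f =
      ∑ w ∈ assigned X f, a w f + b (assigned X f) f - ∑ w ∈ assigned X f, p w := by
    rw [firmPayoff, sum_sub_distrib]
    ring
  have hopt (f) (D) (hD : D ∈ 𝒯 f) : ∑ w ∈ D, a w f + b D f - ∑ w ∈ D, p w ≤
      firmPayoff b (fun w f => p w - a w f) X f := by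
    simpa only [hfirm, add_zero] using h.le_add f D hD
  refine ⟨fun f => Or.inl (h.rfeasible f), fun w => (h.price_nonneg w).trans_eq (hworker w).symm,
    fun f => ?_, ?_⟩
  · exact (hb f).trans (by simpa using hopt f ∅ (h𝒯 f))
  · rintro ⟨f, D, hD, r, hr, hv, hstrict⟩
    simp only [hworker, ge_iff_le, gt_iff_lt] at hr hv hstrict
    have hD_le := hopt f D hD
    have hsum : ∑ w ∈ D, (a w f + r w) = ∑ w ∈ D, a w f + ∑ w ∈ D, r w := sum_add_distrib
    rcases hstrict with ⟨w, hw, hlt⟩ | hlt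
    · linarith [sum_lt_sum hr ⟨w, hw, hlt⟩]
    · linarith [sum_le_sum hr]

end Equilibrium

section Auction

variable {W F : Type*}

section Award

variable [DecidableEq W] {X : W → Option F} {f : F} {D : Finset W} {w : W}

/-- The assignment after firm `f` has taken the workers in `D`. -/
def award (X : W → Option F) (f : F) (D : Finset W) : W → Option F :=
  D.piecewise (fun _ => some f) X

theorem award_of_mem (hw : w ∈ D) : award X f D w = some f :=
  D.piecewise_eq_of_mem _ _ hw

theorem award_of_notMem (hw : w ∉ D) : award X f D w = X w :=
  D.piecewise_eq_of_notMem _ _ hw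

end Award

variable [DecidableEq F]

/-- The number of increments that `f` has to bid for `w` in an auction in which each worker `w` is
held at a standing bid of `n w` increments: a firm keeps the workers it holds at the standing bid
and has to outbid the other holders. -/
def nextBid (X : W → Option F) (n : W → ℕ) (f : F) (w : W) : ℕ :=
  if X w = some f then n w else n w + 1

/-- The weights of the workers for firm `f` in the auction with increment `ε`: match value minus
the amount that `f` has to bid. -/
def netValue (α : W → F → ℝ) (ε : ℝ) (X : W → Option F) (n : W → ℕ) (f : F) (w : W) : ℝ :=
  α w f - nextBid X n f w * ε

theorem le_nextBid (X : W → Option F) (n : W → ℕ) (f : F) (w : W) : n w ≤ nextBid X n f w := by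
  unfold nextBid
  split_ifs <;> omega

theorem nextBid_le (X : W → Option F) (n : W → ℕ) (f : F) (w : W) : nextBid X n f w ≤ n w + 1 := by
  unfold nextBid
  split_ifs <;> omega

theorem nextBid_of_eq {X : W → Option F} {f : F} {w : W} (hw : X w = some f) (n : W → ℕ) :
    nextBid X n f w = n w :=
  if_pos hw

theorem nextBid_of_ne {X : W → Option F} {f : F} {w : W} (hw : X w ≠ some f) (n : W → ℕ) :
    nextBid X n f w = n w + 1 :=
  if_neg hw

theorem nextBid_congr {X X' : W → Option F} {n n' : W → ℕ} {w : W} (hX : X w = X' w)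
    (hn : n w = n' w) (f : F) : nextBid X n f w = nextBid X' n' f w := by
  simp only [nextBid, hX, hn]

section AwardBid

variable [DecidableEq W]

/-- The standing bids after firm `f` has taken the workers in `D`. -/
def awardBid (X : W → Option F) (n : W → ℕ) (f : F) (D : Finset W) : W → ℕ :=
  D.piecewise (nextBid X n f) n

variable {X : W → Option F} {n : W → ℕ} {f g : F} {D : Finset W} {w : W}

theorem awardBid_of_mem (hw : w ∈ D) : awardBid X n f D w = nextBid X n f w :=
  D.piecewise_eq_of_mem _ _ hw

theorem awardBid_of_notMem (hw : w ∉ D) : awardBid X n f D w = n w :=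
  D.piecewise_eq_of_notMem _ _ hw

theorem nextBid_award_of_notMem (hw : w ∉ D) (g : F) :
    nextBid (award X f D) (awardBid X n f D) g w = nextBid X n g w :=
  nextBid_congr (award_of_notMem hw) (awardBid_of_notMem hw) g

theorem nextBid_award_self :
    nextBid (award X f D) (awardBid X n f D) f = nextBid X n f := by
  funext w
  by_cases hw : w ∈ D
  · rw [nextBid_of_eq (award_of_mem hw), awardBid_of_mem hw]
  · exact nextBid_award_of_notMem hw f

theorem nextBid_le_nextBid_award (hgf : g ≠ f) :
    nextBid X n g w ≤ nextBid (award X f D) (awardBid X n f D) g w := by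
  by_cases hw : w ∈ D
  · have hX : award X f D w ≠ some g := by simpa [award_of_mem hw] using hgf.symm
    rw [nextBid_of_ne hX, awardBid_of_mem hw]
    exact (nextBid_le X n g w).trans (Nat.succ_le_succ (le_nextBid X n f w))
  · exact (nextBid_award_of_notMem hw g).ge

theorem le_awardBid : n ≤ awardBid X n f D :=
  D.le_piecewise_of_le_of_le (le_nextBid X n f) le_rfl

theorem lt_awardBid (hw : w ∈ D) (hX : X w ≠ some f) : n < awardBid X n f D :=
  Pi.lt_def.2 ⟨le_awardBid, w, by simp [awardBid_of_mem hw, nextBid_of_ne hX]⟩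

variable [Fintype W]

theorem assigned_award_self_subset (hXD : assigned X f ⊆ D) : assigned (award X f D) f ⊆ D := by
  intro w hw
  by_contra hwD
  rw [mem_assigned, award_of_notMem hwD] at hw
  exact hwD (hXD (mem_assigned.2 hw))

theorem notMem_of_mem_assigned_award (hgf : g ≠ f) (hw : w ∈ assigned (award X f D) g) :
    w ∉ D := by
  intro hwD
  rw [mem_assigned, award_of_mem hwD] at hw
  exact hgf (Option.some_injective F hw).symm

theorem assigned_award_subset_of_ne (hgf : g ≠ f) :
    assigned (award X f D) g ⊆ assigned X g := by
  intro w hw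
  have hwD := notMem_of_mem_assigned_award hgf hw
  rwa [mem_assigned, award_of_notMem hwD, ← mem_assigned] at hw

end AwardBid

variable [Fintype W]

/-- The invariant of the ascending auction with increment `ε`: standing bids on unassigned workers
are zero, and every firm demands some superset of its holding. -/
structure IsAuctionState (M : F → Matroid W) (α : W → F → ℝ) (ε : ℝ) (X : W → Option F)
    (n : W → ℕ) : Prop where
  bid_eq_zero : ∀ w, X w = none → n w = 0
  exists_superset : ∀ f, ∃ D, assigned X f ⊆ D ∧ IsMaxWeight (M f) (netValue α ε X n f) D

variable {M : F → Matroid W} {α : W → F → ℝ} {ε K : ℝ} {X : W → Option F} {n : W → ℕ} {f : F}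
  {D : Finset W}

theorem isAuctionState_zero (M : F → Matroid W) (α : W → F → ℝ) (ε : ℝ) :
    IsAuctionState M α ε (fun _ => none) 0 where
  bid_eq_zero _ _ := rfl
  exists_superset f :=
    (exists_isMaxWeight (M f) _).imp fun D hD => ⟨by simp [assigned], hD⟩

namespace IsAuctionState

theorem bid_mul_le (h : IsAuctionState M α ε X n) (hK : 0 ≤ K) (hα : ∀ w f, α w f ≤ K) (w : W) :
    n w * ε ≤ K := by
  rcases hX : X w with _ | f
  · simpa [h.bid_eq_zero w hX] using hK
  · obtain ⟨D, hXD, hD⟩ := h.exists_superset f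
    have hnonneg := hD.nonneg (hXD (mem_assigned.2 hX))
    rw [netValue, nextBid_of_eq hX, sub_nonneg] at hnonneg
    exact hnonneg.trans (hα w f)

theorem award [DecidableEq W] (h : IsAuctionState M α ε X n) (hε : 0 ≤ ε)
    (hXD : assigned X f ⊆ D) (hD : IsMaxWeight (M f) (netValue α ε X n f) D) :
    IsAuctionState M α ε (award X f D) (awardBid X n f D) where
  bid_eq_zero w hw := by
    by_cases hwD : w ∈ D
    · simp [award_of_mem hwD] at hw
    · rw [award_of_notMem hwD] at hw
      rw [awardBid_of_notMem hwD, h.bid_eq_zero w hw]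
  exists_superset g := by
    rcases eq_or_ne g f with rfl | hgf
    · refine ⟨D, assigned_award_self_subset hXD, ?_⟩
      unfold netValue
      rwa [nextBid_award_self]
    · obtain ⟨E, hXE, hE⟩ := h.exists_superset g
      refine hE.exists_superset_of_le (fun w => ?_) ((assigned_award_subset_of_ne hgf).trans hXE)
        fun w hw => ?_
      · unfold netValue
        gcongr
        exact nextBid_le_nextBid_award hgf
      · rw [netValue, nextBid_award_of_notMem (notMem_of_mem_assigned_award hgf hw), netValue]

theorem exists_lt (h : IsAuctionState M α ε X n) (hε : 0 ≤ ε)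
    (hf : ¬ IsMaxWeight (M f) (netValue α ε X n f) (assigned X f)) :
    ∃ X' n', IsAuctionState M α ε X' n' ∧ n < n' := by
  classical
  obtain ⟨D, hXD, hD⟩ := h.exists_superset f
  have hDX : ¬ D ⊆ assigned X f := fun hDX => hf (hXD.antisymm hDX ▸ hD)
  obtain ⟨w, hwD, hwX⟩ := not_subset.1 hDX
  exact ⟨_, _, h.award hε hXD hD, lt_awardBid hwD (mt mem_assigned.2 hwX)⟩

theorem isApproxEquilibrium (h : IsAuctionState M α ε X n) (hε : 0 ≤ ε)
    (hmax : ∀ f, IsMaxWeight (M f) (netValue α ε X n f) (assigned X f)) :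
    IsApproxEquilibrium (fun f => {D | (M f).Indep ↑D}) (fun D f => ∑ w ∈ D, α w f)
      (Fintype.card W * ε) X fun w => n w * ε where
  rfeasible f := (hmax f).indep
  price_nonneg w := by positivity
  price_eq_zero w hw := by simp [h.bid_eq_zero w hw]
  le_add f D hD := by
    have hprice (w) : α w f - n w * ε ≤ netValue α ε X n f w + ε := by
      have hbid : (nextBid X n f w : ℝ) ≤ n w + 1 := mod_cast nextBid_le X n f w
      rw [netValue]
      linarith [mul_le_mul_of_nonneg_right hbid hε]
    have hassigned : ∑ w ∈ assigned X f, netValue α ε X n f w =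
        ∑ w ∈ assigned X f, (α w f - n w * ε) :=
      sum_congr rfl fun w hw => by rw [netValue, nextBid_of_eq (mem_assigned.1 hw)]
    calc ∑ w ∈ D, α w f - ∑ w ∈ D, n w * ε
        = ∑ w ∈ D, (α w f - n w * ε) := (sum_sub_distrib ..).symm
      _ ≤ ∑ w ∈ D, (netValue α ε X n f w + ε) := sum_le_sum fun w _ => hprice w
      _ = ∑ w ∈ D, netValue α ε X n f w + #D * ε := by
        rw [sum_add_distrib, sum_const, nsmul_eq_mul]
      _ ≤ ∑ w ∈ assigned X f, netValue α ε X n f w + Fintype.card W * ε := by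
        exact add_le_add ((hmax f).sum_le hD) (by gcongr; exact card_le_univ D)
      _ = ∑ w ∈ assigned X f, α w f - ∑ w ∈ assigned X f, n w * ε + Fintype.card W * ε := by
        rw [hassigned, sum_sub_distrib]

end IsAuctionState

theorem exists_isAuctionState_forall_isMaxWeight (M : F → Matroid W) (hε : 0 < ε) (hK : 0 ≤ K)
    (hα : ∀ w f, α w f ≤ K) : ∃ X n, IsAuctionState M α ε X n ∧
      ∀ f, IsMaxWeight (M f) (netValue α ε X n f) (assigned X f) := by
  classical
  let T : Set (W → ℕ) := {n | ∃ X, IsAuctionState M α ε X n}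
  have hT : T.Finite := (Set.finite_Iic fun _ => ⌊K / ε⌋₊).subset fun n ⟨_, h⟩ w =>
    Nat.le_floor ((le_div_iff₀ hε).2 (h.bid_mul_le hK hα w))
  obtain ⟨n, ⟨X, h⟩, hmax⟩ := hT.exists_maximal ⟨0, _, isAuctionState_zero M α ε⟩
  refine ⟨X, n, h, fun f => ?_⟩
  by_contra hf
  obtain ⟨X', n', h', hlt⟩ := h.exists_lt hε.le hf
  exact hlt.not_ge (hmax ⟨X', h'⟩ hlt.le)

theorem exists_isApproxEquilibrium_of_matroid (M : F → Matroid W) (hε : 0 < ε) (hK : 0 ≤ K)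
    (hα : ∀ w f, α w f ≤ K) :
    ∃ X p, IsApproxEquilibrium (fun f => {D | (M f).Indep ↑D}) (fun D f => ∑ w ∈ D, α w f) ε X p ∧
      ∀ w, p w ≤ K := by
  let δ : ℝ := ε / (Fintype.card W + 1)
  have hδ : 0 < δ := by positivity
  have hcard : Fintype.card W * δ ≤ ε := calc
    Fintype.card W * δ ≤ (Fintype.card W + 1) * δ := by gcongr; linarith
    _ = ε := mul_div_cancel₀ ε (by positivity)
  obtain ⟨X, n, h, hmax⟩ := exists_isAuctionState_forall_isMaxWeight M hδ hK hα
  exact ⟨X, _, (h.isApproxEquilibrium hδ.le hmax).mono hcard, h.bid_mul_le hK hα⟩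

theorem stable_exists_of_matroid [Finite F] (M : F → Matroid W) (a c : W → F → ℝ) :
    ∃ (X : W → Option F) (s : W → F → ℝ),
      Stable a (fun D f => ∑ w ∈ D, c w f) (fun f => {D | (M f).Indep ↑D}) s X := by
  obtain ⟨K, hK⟩ := Finite.exists_le fun x : W × F => a x.1 x.2 + c x.1 x.2
  obtain ⟨X, p, h⟩ := exists_isApproxEquilibrium_zero (max K 0) fun ε hε =>
    exists_isApproxEquilibrium_of_matroid M hε (le_max_right K 0)
      fun w f => (hK (w, f)).trans (le_max_left K 0)
  simp only [sum_add_distrib] at h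
  exact ⟨X, _, stable_of_isApproxEquilibrium_zero h (fun _ => by simp) fun _ => by simp⟩

end Auction

/-- **Existence of stable arrangements under polymatroid constraints.** If firms have
linear preferences and, for each firm `f`, the upper-bound constraint family `ℋ f` is an
intersecting family with nonnegative integer quotas `lam f` that are submodular on
intersecting pairs, then a stable arrangement exists. -/
theorem stable_exists_of_polymatroid
    {W F : Type*} [Fintype W] [DecidableEq W] [Fintype F] [DecidableEq F]
    (a c : W → F → ℝ) (ℋ : F → Set (Finset W)) (lam : F → Finset W → ℤ)
    (hpos : ∀ f : F, ∀ D ∈ ℋ f, 0 ≤ lam f D)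
    (hfam : ∀ f : F, IntersectingFamily (ℋ f))
    (hsub : ∀ f : F, SubmodularOnIntersecting (ℋ f) (lam f)) :
    ∃ (X : W → Option F) (s : W → F → ℝ),
      Stable a (fun D f => ∑ w ∈ D, c w f) (fun f => upperSets (ℋ f) (lam f)) s X := by
  choose M hM using fun f =>
    exists_matroid_indep_iff_mem_upperSets (hpos f) (hfam f) (hsub f)
  simpa only [hM, Set.ofPred_mem_eq] using stable_exists_of_matroid M a c

end TwoSidedMatching
end

section
/- Suppose firms have linear preferences over workers and, for each firm f, the upper-bound constraint family ℋ_f is a hierarchy with nonnegative integer quotas λ̄_D for D ∈ ℋ_f. Then a stable arrangement exists. -/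
open Finset

namespace TwoSidedMatching

variable {W F : Type*} [Fintype W] [DecidableEq W] [Fintype F] [DecidableEq F]

/-!
Assignments respecting the quotas are the integral points of a polytope in `ℝ^(W × F)` cut out by
two laminar families of constraints, one indexed by the workers and one by the hiring quotas.
Extreme points of such a polytope are integral. Indeed, the tight constraints of each family
partition the coordinates they involve into classes, and the coordinates of a point have integral
sum over every class, so no class contains exactly one fractional coordinate. View the fractional
coordinates as the edges of a bipartite multigraph between the classes of the two families. Since
all degrees are at least two, there are at least as many edges as classes, and in case of equality
the class sums satisfy a linear relation; hence some nonzero direction has sum zero over every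
class. The point can be moved both ways along this direction, so it is not extreme.

The matching linear program therefore has an optimal solution that is an assignment. The Lagrange
multipliers `u` of the workers' constraints decouple the firms: each firm is assigned a feasible
set of maximal match value net of `u`. Under the salaries `u - a` every worker `w` has payoff
`u w`, so a blocking coalition would yield a feasible set of larger net value.
-/

open scoped Topology

section Convex

variable {ι E : Type*}

theorem exists_nonneg_forall_sum_mul_nonneg_of_disjoint [Fintype ι] {C : Set (ι → ℝ)}
    (hC : Convex ℝ C) (hne : C.Nonempty) (hdisj : Disjoint (Set.univ.pi fun _ => Set.Iio 0) C) :
    ∃ u : ι → ℝ, 0 ≤ u ∧ u ≠ 0 ∧ ∀ y ∈ C, 0 ≤ ∑ i, u i * y i := by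
  classical
  obtain ⟨φ, k, hφneg, hφC⟩ := geometric_hahn_banach_open (convex_pi fun _ _ => convex_Iio 0)
    (isOpen_set_pi Set.finite_univ fun _ _ => isOpen_Iio) hC hdisj
  have hφ (y : ι → ℝ) : φ y = ∑ i, φ (Pi.single i 1) * y i := by
    conv_lhs => rw [pi_eq_sum_univ' y, map_sum]
    exact sum_congr rfl fun i _ => by rw [map_smul, smul_eq_mul, mul_comm]
  have hφle (y : ι → ℝ) (hy : y ≤ 0) : φ y ≤ k := by
    have hmem : y ∈ closure (Set.univ.pi fun _ : ι => Set.Iio (0 : ℝ)) := by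
      simp only [closure_pi_set, closure_Iio]
      exact fun i _ => hy i
    exact closure_minimal (fun z hz => (hφneg z hz).le) (isClosed_Iic.preimage φ.continuous) hmem
  have hk : 0 ≤ k := by simpa using hφle 0 le_rfl
  refine ⟨fun i => φ (Pi.single i 1), fun i => ?_, fun h => ?_, fun y hy => ?_⟩
  · by_contra! hneg
    have hle := hφle (((k + 1) / φ (Pi.single i 1)) • Pi.single i 1) <|
      smul_nonpos_of_nonpos_of_nonneg (div_nonpos_of_nonneg_of_nonpos (by linarith) hneg.le)
        (Pi.single_nonneg.2 zero_le_one)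
    rw [map_smul, smul_eq_mul, div_mul_cancel₀ _ hneg.ne] at hle
    linarith
  · have hzero (y : ι → ℝ) : φ y = 0 :=
      (hφ y).trans <| sum_eq_zero fun i _ => mul_eq_zero_of_left (congrFun h i) _
    obtain ⟨y, hy⟩ := hne
    have hlt := hφneg (fun _ => -1) fun _ _ => by simp
    have hle := hφC y hy
    rw [hzero] at hlt hle
    exact hlt.not_ge hle
  · rw [← hφ]
    exact hk.trans (hφC y hy)

theorem exists_nonneg_weights_of_forall_exists_nonneg [Fintype ι] [AddCommGroup E] [Module ℝ E]
    {s : Set E} (hs : Convex ℝ s) (hne : s.Nonempty) {g : ι → E → ℝ}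
    (hg : ∀ i, ConvexOn ℝ s (g i)) (halt : ∀ x ∈ s, ∃ i, 0 ≤ g i x) :
    ∃ u : ι → ℝ, 0 ≤ u ∧ u ≠ 0 ∧ ∀ x ∈ s, 0 ≤ ∑ i, u i * g i x := by
  let C : Set (ι → ℝ) := {y | ∃ x ∈ s, ∀ i, g i x ≤ y i}
  have hgC (x : E) (hx : x ∈ s) : (fun i => g i x) ∈ C := ⟨x, hx, fun _ => le_rfl⟩
  have hC : Convex ℝ C := by
    rintro y ⟨x, hx, hxy⟩ y' ⟨x', hx', hxy'⟩ p q hp hq hpq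
    exact ⟨p • x + q • x', hs hx hx' hp hq hpq, fun i => ((hg i).2 hx hx' hp hq hpq).trans <|
      add_le_add (mul_le_mul_of_nonneg_left (hxy i) hp) (mul_le_mul_of_nonneg_left (hxy' i) hq)⟩
  have hdisj : Disjoint (Set.univ.pi fun _ => Set.Iio 0) C := by
    refine Set.disjoint_left.2 fun y hyneg ⟨x, hx, hxy⟩ => ?_
    obtain ⟨i, hi⟩ := halt x hx
    exact (hi.trans (hxy i)).not_gt (hyneg i trivial)
  obtain ⟨u, hu, hu0, huC⟩ := exists_nonneg_forall_sum_mul_nonneg_of_disjoint hC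
    (hne.elim fun x hx => ⟨_, hgC x hx⟩) hdisj
  exact ⟨u, hu, hu0, fun x hx => huC _ (hgC x hx)⟩

theorem exists_nonneg_forall_sub_sum_le [Fintype ι] [AddCommGroup E] [Module ℝ E] {s : Set E}
    {φ : E → ℝ} (hφ : ConcaveOn ℝ s φ) {g : ι → E → ℝ} (hg : ∀ i, ConvexOn ℝ s (g i))
    (hslater : ∃ x ∈ s, ∀ i, g i x < 0) {m : ℝ} (hm : ∀ x ∈ s, (∀ i, g i x ≤ 0) → φ x ≤ m) :
    ∃ u : ι → ℝ, 0 ≤ u ∧ ∀ x ∈ s, φ x - ∑ i, u i * g i x ≤ m := by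
  obtain ⟨z, hz, hgz⟩ := hslater
  obtain ⟨l, hl, hl0, hlg⟩ := exists_nonneg_weights_of_forall_exists_nonneg (ι := Option ι) hφ.1
    ⟨z, hz⟩ (g := fun o x => o.elim (m - φ x) fun i => g i x)
    (Option.forall.2 ⟨(convexOn_const _ hφ.1).sub hφ, hg⟩) fun x hx => by
      by_contra! hneg
      exact (hneg none).not_ge (sub_nonneg.2 (hm x hx fun i => (hneg (some i)).le))
  simp only [Fintype.sum_option, Option.elim_none, Option.elim_some] at hlg
  have hnone : 0 < l none := by
    refine (hl none).lt_of_ne fun hzero => hl0 ?_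
    have hterm (i : ι) : l (some i) * g i z ≤ 0 :=
      mul_nonpos_of_nonneg_of_nonpos (hl _) (hgz i).le
    have hsum : ∑ i, l (some i) * g i z = 0 :=
      (sum_nonpos fun i _ => hterm i).antisymm (by simpa [← hzero] using hlg z hz)
    have hall := (sum_eq_zero_iff_of_nonpos fun i _ => hterm i).1 hsum
    exact funext <| Option.forall.2 ⟨hzero.symm, fun i =>
      (mul_eq_zero.1 (hall i (mem_univ i))).resolve_right (hgz i).ne⟩
  refine ⟨fun i => l (some i) / l none, fun i => div_nonneg (hl _) hnone.le, fun x hx => ?_⟩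
  have hscale : ∑ i, l (some i) / l none * g i x = (∑ i, l (some i) * g i x) / l none := by
    simp only [sum_div, div_mul_eq_mul_div]
  have hlgx := hlg x hx
  rw [hscale, sub_le_comm, le_div_iff₀ hnone]
  linarith

theorem exists_lagrange_multipliers [Fintype ι] [AddCommGroup E] [Module ℝ E] {s : Set E}
    {φ : E → ℝ} (hφ : ConcaveOn ℝ s φ) {g : ι → E → ℝ} (hg : ∀ i, ConvexOn ℝ s (g i))
    (hslater : ∃ x ∈ s, ∀ i, g i x < 0) {x₀ : E} (hx₀ : x₀ ∈ s) (hgx₀ : ∀ i, g i x₀ ≤ 0)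
    (hmax : IsMaxOn φ {x ∈ s | ∀ i, g i x ≤ 0} x₀) :
    ∃ u : ι → ℝ, 0 ≤ u ∧ (∀ i, u i * g i x₀ = 0) ∧ ∀ x ∈ s, φ x - ∑ i, u i * g i x ≤ φ x₀ := by
  obtain ⟨u, hu, hdual⟩ :=
    exists_nonneg_forall_sub_sum_le hφ hg hslater fun x hx hgx => hmax ⟨hx, hgx⟩
  have hterm (i : ι) : u i * g i x₀ ≤ 0 := mul_nonpos_of_nonneg_of_nonpos (hu i) (hgx₀ i)
  have hsum : ∑ i, u i * g i x₀ = 0 :=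
    (sum_nonpos fun i _ => hterm i).antisymm (by linarith [hdual x₀ hx₀])
  exact ⟨u, hu, fun i => (sum_eq_zero_iff_of_nonpos fun i _ => hterm i).1 hsum i (mem_univ i),
    hdual⟩

theorem exists_mem_extremePoints_isMaxOn [AddCommGroup E] [Module ℝ E] [TopologicalSpace E]
    [T2Space E] [IsTopologicalAddGroup E] [ContinuousSMul ℝ E] [LocallyConvexSpace ℝ E] {s : Set E}
    (hs : IsCompact s) (hne : s.Nonempty) (l : StrongDual ℝ E) :
    ∃ x ∈ s.extremePoints ℝ, IsMaxOn l s x := by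
  have hexp : IsExposed ℝ s (l.toExposed s) := ContinuousLinearMap.toExposed.isExposed
  obtain ⟨y, hy, hmax⟩ := hs.exists_isMaxOn hne l.continuous.continuousOn
  obtain ⟨x, hx⟩ := (hexp.isCompact hs).extremePoints_nonempty ⟨y, hy, hmax⟩
  exact ⟨x, hexp.isExtreme.extremePoints_subset_extremePoints hx, hx.1.2⟩

theorem eq_zero_of_mem_extremePoints [AddCommGroup E] [Module ℝ E] {s : Set E} {x d : E}
    (hx : x ∈ s.extremePoints ℝ) (hd : ∀ᶠ η in 𝓝 (0 : ℝ), x + η • d ∈ s) : d = 0 := by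
  obtain ⟨ε, hε, hball⟩ := Metric.eventually_nhds_iff.1 hd
  have hmem (η : ℝ) (hη : |η| = ε / 2) : x + η • d ∈ s :=
    hball (by rw [dist_zero_right, Real.norm_eq_abs, hη]; exact half_lt_self hε)
  have hε2 : |ε / 2| = ε / 2 := abs_of_pos (half_pos hε)
  have heq := hx.2 (hmem (ε / 2) hε2) (hmem (-(ε / 2)) (by rwa [abs_neg]))
    ⟨1 / 2, 1 / 2, by norm_num, by norm_num, by norm_num, by module⟩
  simpa [hε.ne'] using heq

end Convex

section Balanced

variable {ι A B : Type*} [Fintype ι] [DecidableEq A] [DecidableEq B]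

theorem mul_card_le_card_filter_mem {p : ι → A} {S : Finset A} {n : ℕ}
    (hS : ∀ a ∈ S, n ≤ #{e | p e = a}) : #S * n ≤ #{e | p e ∈ S} := by
  by_contra! hlt
  obtain ⟨a, ha, hfib⟩ := exists_card_fiber_lt_of_card_lt_mul (f := p) hlt
  refine hfib.not_ge ((hS a ha).trans (card_le_card fun e he => ?_))
  have hea : p e = a := by simpa using he
  simp [hea, ha]

theorem exists_ne_zero_balanced_of_two_le_card (K : Type*) [Field K] [CharZero K] [Nonempty ι]
    {p : ι → A} {q : ι → B} {S : Finset A} {T : Finset B} (hS : ∀ a ∈ S, 2 ≤ #{e | p e = a})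
    (hT : ∀ b ∈ T, 2 ≤ #{e | q e = b}) :
    ∃ d : ι → K, d ≠ 0 ∧ (∀ a ∈ S, ∑ e with p e = a, d e = 0) ∧
      ∀ b ∈ T, ∑ e with q e = b, d e = 0 := by
  classical
  let L : (ι → K) →ₗ[K] (S ⊕ T → K) := LinearMap.pi <| Sum.elim
    (fun a => ∑ e with p e = a, LinearMap.proj e) (fun b => ∑ e with q e = b, LinearMap.proj e)
  have hLS (d : ι → K) (a : S) : L d (.inl a) = ∑ e with p e = a, d e := by simp [L]
  have hLT (d : ι → K) (b : T) : L d (.inr b) = ∑ e with q e = b, d e := by simp [L]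
  suffices hker : LinearMap.ker L ≠ ⊥ by
    obtain ⟨d, hd, hd0⟩ := Submodule.exists_mem_ne_zero_of_ne_bot hker
    have hLd := congrFun (LinearMap.mem_ker.1 hd)
    exact ⟨d, hd0, fun a ha => (hLS d ⟨a, ha⟩).symm.trans (hLd _),
      fun b hb => (hLT d ⟨b, hb⟩).symm.trans (hLd _)⟩
  have hScard := mul_card_le_card_filter_mem hS
  have hTcard := mul_card_le_card_filter_mem hT
  have hSle : #{e | p e ∈ S} ≤ Fintype.card ι := card_le_univ _
  have hTle : #{e | q e ∈ T} ≤ Fintype.card ι := card_le_univ _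
  have hpos : 0 < Fintype.card ι := Fintype.card_pos
  rcases (show #S + #T ≤ Fintype.card ι by lia).lt_or_eq with hlt | heq
  · exact LinearMap.ker_ne_bot_of_finrank_lt (by simpa using hlt)
  · have hpS : ∀ e, p e ∈ S := by
      simpa using card_filter_eq_iff.1 (by rw [card_univ]; lia : #{e | p e ∈ S} = #univ)
    have hqT : ∀ e, q e ∈ T := by
      simpa using card_filter_eq_iff.1 (by rw [card_univ]; lia : #{e | q e ∈ T} = #univ)
    -- Both blocks of coordinates of `L d` add up to `∑ e, d e`, so `L` is not onto.
    have hsum (d : ι → K) : ∑ a : S, L d (.inl a) = ∑ b : T, L d (.inr b) := by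
      simp only [hLS, hLT, sum_coe_sort S fun a => ∑ e with p e = a, d e,
        sum_coe_sort T fun b => ∑ e with q e = b, d e]
      rw [sum_fiberwise_of_maps_to fun e _ => hpS e, sum_fiberwise_of_maps_to fun e _ => hqT e]
    intro hker
    have hsurj : Function.Surjective L :=
      (LinearMap.injective_iff_surjective_of_finrank_eq_finrank (by simpa using heq.symm)).1
        (LinearMap.ker_eq_bot.1 hker)
    obtain ⟨d, hd⟩ := hsurj (Sum.elim 1 0)
    have hS0 : #S = 0 := by simpa [hd] using hsum d
    lia

theorem two_le_card_filter_eq {p : ι → A} {S : Set A} (hS : ∀ e, p e ∈ S → ∃ e' ≠ e, p e' = p e)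
    {a : A} (ha : a ∈ Set.range p ∩ S) : 2 ≤ #{e | p e = a} := by
  obtain ⟨⟨e, rfl⟩, he⟩ := ha
  obtain ⟨e', hne, he'⟩ := hS e he
  exact one_lt_card.2 ⟨e', by simpa using he', e, by simp, hne⟩

theorem exists_ne_zero_balanced (K : Type*) [Field K] [CharZero K] [Nonempty ι] {p : ι → A}
    {q : ι → B} {S : Set A} {T : Set B} (hS : ∀ e, p e ∈ S → ∃ e' ≠ e, p e' = p e)
    (hT : ∀ e, q e ∈ T → ∃ e' ≠ e, q e' = q e) :
    ∃ d : ι → K, d ≠ 0 ∧ (∀ a ∈ S, ∑ e with p e = a, d e = 0) ∧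
      ∀ b ∈ T, ∑ e with q e = b, d e = 0 := by
  have hfinS := (Set.finite_range p).inter_of_left S
  have hfinT := (Set.finite_range q).inter_of_left T
  obtain ⟨d, hd, hdS, hdT⟩ := exists_ne_zero_balanced_of_two_le_card K
    (S := hfinS.toFinset) (T := hfinT.toFinset)
    (fun a ha => two_le_card_filter_eq hS (hfinS.mem_toFinset.1 ha))
    (fun b hb => two_le_card_filter_eq hT (hfinT.mem_toFinset.1 hb))
  refine ⟨d, hd, fun a ha => ?_, fun b hb => ?_⟩
  · by_cases hr : a ∈ Set.range p
    · exact hdS a (hfinS.mem_toFinset.2 ⟨hr, ha⟩)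
    · rw [filter_false_of_mem fun e _ he => hr ⟨e, he⟩, sum_empty]
  · by_cases hr : b ∈ Set.range q
    · exact hdT b (hfinT.mem_toFinset.2 ⟨hr, hb⟩)
    · rw [filter_false_of_mem fun e _ he => hr ⟨e, he⟩, sum_empty]

end Balanced

section Laminar

theorem exists_ne_notMem_of_sum_mem {ι M : Type*} [AddCommGroup M]
    {G : AddSubgroup M} {s : Finset ι} {g : ι → M}
    (hsum : ∑ e ∈ s, g e ∈ G) {e : ι} (he : e ∈ s) (hge : g e ∉ G) :
    ∃ e' ∈ s, e' ≠ e ∧ g e' ∉ G := by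
  classical
  by_contra! hrest
  rw [← add_sum_erase s g he] at hsum
  exact hge <| (G.add_mem_cancel_right <| G.sum_mem fun e' he' =>
    hrest e' (mem_of_mem_erase he') (ne_of_mem_erase he')).1 hsum

theorem sum_filter_extend_zero {ι ι' M : Type*} [Fintype ι] [Fintype ι'] [AddCommMonoid M]
    {r : ι' → ι} (hr : Function.Injective r) (d : ι' → M) (P : ι → Prop) [DecidablePred P] :
    ∑ e with P e, Function.extend r d 0 e = ∑ e' with P (r e'), d e' := by
  refine (sum_of_injOn r hr.injOn (by simp [Set.MapsTo]) (fun e he he' => ?_)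
    fun e' _ => (hr.extend_apply d 0 e').symm).symm
  refine Function.extend_apply' _ _ _ ?_
  rintro ⟨e', rfl⟩
  exact he' ⟨e', by simpa using he, rfl⟩

theorem sum_filter_comp_eq_sum_fiberwise {ι C M : Type*} [Fintype ι] [Fintype C] [DecidableEq C]
    [AddCommMonoid M] (r : ι → C) (P : C → Prop) [DecidablePred P] (g : ι → M) :
    ∑ e with P (r e), g e = ∑ c with P c, ∑ e with r e = c, g e := by
  rw [← sum_fiberwise_of_maps_to (g := r) (t := {c | P c}) (fun e he => by simpa using he)]
  refine sum_congr rfl fun c hc => ?_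
  rw [filter_filter]
  refine sum_congr (filter_congr fun e _ => and_iff_right_of_imp fun he => ?_) fun _ _ => rfl
  exact he ▸ (mem_filter.1 hc).2

variable {ι κ M : Type*}

/-- A laminar family: any two members are nested or disjoint. Unlike `Hierarchy`, the family is
indexed, so that each index can carry its own quota, and empty members are allowed. -/
def Laminar (D : κ → Finset ι) : Prop :=
  ∀ k l, D k ⊆ D l ∨ D l ⊆ D k ∨ Disjoint (D k) (D l)

theorem Laminar.comp {κ' : Type*} {D : κ → Finset ι} (hD : Laminar D) (r : κ' → κ) :
    Laminar (D ∘ r) :=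
  fun k l => hD (r k) (r l)

variable [DecidableEq ι] [Fintype κ]

/-- The indices of the members of the family `D` containing `e`. The fibres of `memberships D` are
the classes of elements that the family does not separate. -/
def memberships (D : κ → Finset ι) (e : ι) : Finset κ :=
  {k | e ∈ D k}

@[simp]
theorem mem_memberships {D : κ → Finset ι} {e : ι} {k : κ} : k ∈ memberships D e ↔ e ∈ D k := by
  simp [memberships]

theorem Laminar.exists_mem_iff_memberships_subset {D : κ → Finset ι} (hD : Laminar D) {e : ι}
    (he : (memberships D e).Nonempty) :
    ∃ k, ∀ e', e' ∈ D k ↔ memberships D e ⊆ memberships D e' := by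
  obtain ⟨k, hk, hmin⟩ := exists_min_image _ (fun k => #(D k)) he
  rw [mem_memberships] at hk
  refine ⟨k, fun e' => ⟨fun he' l hl => ?_, fun hsub => ?_⟩⟩
  · have hkl : D k ⊆ D l := by
      rcases hD k l with h | h | h
      · exact h
      · exact (eq_of_subset_of_card_le h (hmin l hl)).ge
      · exact absurd (mem_memberships.1 hl) (disjoint_left.1 h hk)
    exact mem_memberships.2 (hkl he')
  · exact mem_memberships.1 (hsub (mem_memberships.2 hk))

theorem filter_mem_memberships [Fintype ι] [DecidableEq κ] (D : κ → Finset ι) (k : κ) :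
    ({e | k ∈ memberships D e} : Finset ι) = D k := by
  ext e
  simp

theorem Laminar.sum_memberships_eq_mem [Fintype ι] [DecidableEq κ] [AddCommGroup M]
    {D : κ → Finset ι} (hD : Laminar D) (G : AddSubgroup M) {g : ι → M}
    (hg : ∀ k, ∑ e ∈ D k, g e ∈ G) {τ : Finset κ} (hτ : τ.Nonempty) :
    ∑ e with memberships D e = τ, g e ∈ G := by
  induction τ using WellFoundedGT.induction with
  | ind τ ih =>
    obtain hempty | ⟨e, he⟩ := ({e | memberships D e = τ} : Finset ι).eq_empty_or_nonempty
    · simp [hempty]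
    obtain rfl : memberships D e = τ := by simpa using he
    obtain ⟨k, hk⟩ := hD.exists_mem_iff_memberships_subset hτ
    have hDk : D k = ({e' | memberships D e ⊆ memberships D e'} : Finset ι) := by
      ext e'
      simpa using hk e'
    have hsum := hg k
    rw [hDk, sum_filter_comp_eq_sum_fiberwise, ← add_sum_erase _ _ (mem_filter.2 ⟨mem_univ _,
      subset_rfl⟩)] at hsum
    refine (G.add_mem_cancel_right <| G.sum_mem fun τ hτ' => ?_).1 hsum
    obtain ⟨hne, hsub⟩ : τ ≠ memberships D e ∧ memberships D e ⊆ τ := by simpa using hτ'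
    exact ih τ (hsub.ssubset_of_ne hne.symm) (hτ.mono hsub)

theorem Laminar.exists_ne_memberships_eq [Finite ι] [AddCommGroup M] {D : κ → Finset ι}
    (hD : Laminar D) {G : AddSubgroup M} {x : ι → M} (hx : ∀ k, ∑ e ∈ D k, x e ∈ G) {e : ι}
    (he : (memberships D e).Nonempty) (hxe : x e ∉ G) :
    ∃ e' : {e' // x e' ∉ G}, e' ≠ ⟨e, hxe⟩ ∧ memberships D e' = memberships D e := by
  classical
  cases nonempty_fintype ι
  obtain ⟨e', he', hne, hxe'⟩ :=
    exists_ne_notMem_of_sum_mem (hD.sum_memberships_eq_mem G hx he) (e := e) (by simp) hxe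
  exact ⟨⟨e', hxe'⟩, by simpa using hne, by simpa using he'⟩

theorem sum_eq_zero_of_sum_memberships_eq [Fintype ι] [DecidableEq κ] [AddCommMonoid M]
    {D : κ → Finset ι} {g : ι → M}
    (hg : ∀ τ : Finset κ, τ.Nonempty → ∑ e with memberships D e = τ, g e = 0) (k : κ) :
    ∑ e ∈ D k, g e = 0 := by
  rw [← filter_mem_memberships D k, sum_filter_comp_eq_sum_fiberwise (memberships D) (k ∈ ·)]
  exact sum_eq_zero fun τ hk => hg τ ⟨k, (mem_filter.1 hk).2⟩

theorem Laminar.exists_balanced_direction {ι κ₁ κ₂ : Type*} [Finite ι] [Finite κ₁]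
    [Finite κ₂] (K : Type*) [Field K] [CharZero K] [AddCommGroup M] {D₁ : κ₁ → Finset ι}
    {D₂ : κ₂ → Finset ι} (hD₁ : Laminar D₁) (hD₂ : Laminar D₂)
    (G : AddSubgroup M) {x : ι → M} (hx₁ : ∀ k, ∑ e ∈ D₁ k, x e ∈ G)
    (hx₂ : ∀ k, ∑ e ∈ D₂ k, x e ∈ G) (hx : ∃ e, x e ∉ G) :
    ∃ d : ι → K, d ≠ 0 ∧ (∀ e, x e ∈ G → d e = 0) ∧ (∀ k, ∑ e ∈ D₁ k, d e = 0) ∧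
      ∀ k, ∑ e ∈ D₂ k, d e = 0 := by
  classical
  cases nonempty_fintype ι
  cases nonempty_fintype κ₁
  cases nonempty_fintype κ₂
  let N := {e // x e ∉ G}
  have hN : Nonempty N := nonempty_subtype.2 hx
  obtain ⟨d, hd, hd₁, hd₂⟩ := exists_ne_zero_balanced K (p := fun e : N => memberships D₁ e)
    (q := fun e : N => memberships D₂ e) (S := {τ | τ.Nonempty}) (T := {τ | τ.Nonempty})
    (fun e he => hD₁.exists_ne_memberships_eq hx₁ he e.2)
    (fun e he => hD₂.exists_ne_memberships_eq hx₂ he e.2)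
  have hinj : Function.Injective (Subtype.val : N → ι) := Subtype.val_injective
  refine ⟨Function.extend Subtype.val d 0, fun h => hd ?_, fun e he => ?_, ?_, ?_⟩
  · ext e
    rw [← hinj.extend_apply d 0, h]
    rfl
  · exact Function.extend_apply' _ _ _ fun ⟨e', he'⟩ => e'.2 (he' ▸ he)
  · exact sum_eq_zero_of_sum_memberships_eq fun τ hτ =>
      (sum_filter_extend_zero hinj d _).trans (hd₁ τ hτ)
  · exact sum_eq_zero_of_sum_memberships_eq fun τ hτ =>
      (sum_filter_extend_zero hinj d _).trans (hd₂ τ hτ)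

end Laminar

section QuotaPolyhedron

variable {ι κ κ₁ κ₂ : Type*}

/-- The nonnegative vectors whose sum over each member of the family `D` is at most its quota:
a fractional relaxation of the subsets of `ι` meeting each `D k` in at most `b k` elements. -/
def quotaPolyhedron (D : κ → Finset ι) (b : κ → ℝ) : Set (ι → ℝ) :=
  {x | 0 ≤ x ∧ ∀ k, ∑ e ∈ D k, x e ≤ b k}

theorem zero_mem_quotaPolyhedron {D : κ → Finset ι} {b : κ → ℝ} (hb : 0 ≤ b) :
    0 ∈ quotaPolyhedron D b :=
  ⟨le_rfl, fun k => by simpa using hb k⟩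

theorem convex_quotaPolyhedron (D : κ → Finset ι) (b : κ → ℝ) :
    Convex ℝ (quotaPolyhedron D b) := by
  refine fun x hx y hy p q hp hq hpq =>
    ⟨convex_Ici (𝕜 := ℝ) (0 : ι → ℝ) hx.1 hy.1 hp hq hpq, fun k => ?_⟩
  simpa [sum_add_distrib, mul_sum] using convex_Iic (b k) (hx.2 k) (hy.2 k) hp hq hpq

theorem isClosed_quotaPolyhedron (D : κ → Finset ι) (b : κ → ℝ) :
    IsClosed (quotaPolyhedron D b) := by
  simp only [quotaPolyhedron, Set.ofPred_and, Set.ofPred_forall]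
  exact isClosed_Ici.inter <| isClosed_iInter fun k =>
    isClosed_le (by fun_prop) continuous_const

theorem isCompact_quotaPolyhedron {D : κ → Finset ι} (hD : ∀ e, ∃ k, e ∈ D k) (b : κ → ℝ) :
    IsCompact (quotaPolyhedron D b) := by
  choose k hk using hD
  refine (isCompact_Icc (a := (0 : ι → ℝ)) (b := fun e => b (k e))).of_isClosed_subset
    (isClosed_quotaPolyhedron D b) fun x hx => ⟨hx.1, fun e => ?_⟩
  exact (single_le_sum (fun e' _ => hx.1 e') (hk e)).trans (hx.2 (k e))

theorem eventually_add_mul_le {p q r : ℝ} (h : p ≤ r) (hq : p = r → q = 0) :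
    ∀ᶠ η in 𝓝 (0 : ℝ), p + η * q ≤ r := by
  obtain rfl | hlt := h.eq_or_lt
  · simp [hq rfl]
  · have hcont : Filter.Tendsto (fun η : ℝ => p + η * q) (𝓝 0) (𝓝 p) :=
      Continuous.tendsto' (by fun_prop) _ _ (by simp)
    exact hcont.eventually_le_const hlt

theorem eventually_add_smul_mem_quotaPolyhedron [Finite ι] [Finite κ] {D : κ → Finset ι}
    {b : κ → ℝ} {x d : ι → ℝ} (hx : x ∈ quotaPolyhedron D b) (hd : ∀ e, x e = 0 → d e = 0)
    (hD : ∀ k, ∑ e ∈ D k, x e = b k → ∑ e ∈ D k, d e = 0) :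
    ∀ᶠ η in 𝓝 (0 : ℝ), x + η • d ∈ quotaPolyhedron D b := by
  have hnonneg (e : ι) : ∀ᶠ η in 𝓝 (0 : ℝ), -x e + η * -d e ≤ 0 :=
    eventually_add_mul_le (neg_nonpos.2 (hx.1 e)) fun h => by simp [hd e (neg_eq_zero.1 h)]
  have hquota (k : κ) : ∀ᶠ η in 𝓝 (0 : ℝ), ∑ e ∈ D k, x e + η * ∑ e ∈ D k, d e ≤ b k :=
    eventually_add_mul_le (hx.2 k) (hD k)
  filter_upwards [Filter.eventually_all.2 hnonneg, Filter.eventually_all.2 hquota] with η h₁ h₂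
  refine ⟨fun e => ?_, fun k => ?_⟩
  · have := h₁ e
    simp only [Pi.zero_apply, Pi.add_apply, Pi.smul_apply, smul_eq_mul]
    linarith
  · simpa [sum_add_distrib, mul_sum] using h₂ k

theorem Laminar.apply_mem_of_mem_extremePoints [Finite ι] [Finite κ₁] [Finite κ₂]
    {D₁ : κ₁ → Finset ι} {D₂ : κ₂ → Finset ι} (hD₁ : Laminar D₁) (hD₂ : Laminar D₂)
    {b₁ : κ₁ → ℝ} {b₂ : κ₂ → ℝ} {G : AddSubgroup ℝ} (hb₁ : ∀ k, b₁ k ∈ G) (hb₂ : ∀ k, b₂ k ∈ G)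
    {x : ι → ℝ} (hx : x ∈ (quotaPolyhedron D₁ b₁ ∩ quotaPolyhedron D₂ b₂).extremePoints ℝ)
    (e : ι) : x e ∈ G := by
  by_contra hxe
  obtain ⟨d, hd0, hd, hd₁, hd₂⟩ := (hD₁.comp fun k : {k // ∑ e ∈ D₁ k, x e = b₁ k} => k.1)
    |>.exists_balanced_direction ℝ (hD₂.comp fun k : {k // ∑ e ∈ D₂ k, x e = b₂ k} => k.1) G
    (fun k => k.2 ▸ hb₁ k.1) (fun k => k.2 ▸ hb₂ k.1) ⟨e, hxe⟩
  have hzero (e : ι) (he : x e = 0) : d e = 0 := hd e (he ▸ G.zero_mem)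
  refine hd0 (eq_zero_of_mem_extremePoints hx ?_)
  filter_upwards [eventually_add_smul_mem_quotaPolyhedron hx.1.1 hzero fun k hk => hd₁ ⟨k, hk⟩,
    eventually_add_smul_mem_quotaPolyhedron hx.1.2 hzero fun k hk => hd₂ ⟨k, hk⟩] with η h₁ h₂
  exact ⟨h₁, h₂⟩

theorem Laminar.exists_isMaxOn_apply_mem [Finite ι] [Finite κ₁] [Finite κ₂]
    {D₁ : κ₁ → Finset ι} {D₂ : κ₂ → Finset ι} (hD₁ : Laminar D₁) (hD₂ : Laminar D₂)
    (hcover : ∀ e, ∃ k, e ∈ D₁ k) {b₁ : κ₁ → ℝ} {b₂ : κ₂ → ℝ} (hb₁ : 0 ≤ b₁) (hb₂ : 0 ≤ b₂)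
    {G : AddSubgroup ℝ} (hG₁ : ∀ k, b₁ k ∈ G) (hG₂ : ∀ k, b₂ k ∈ G) (l : (ι → ℝ) →ₗ[ℝ] ℝ) :
    ∃ x ∈ quotaPolyhedron D₁ b₁ ∩ quotaPolyhedron D₂ b₂, (∀ e, x e ∈ G) ∧
      IsMaxOn l (quotaPolyhedron D₁ b₁ ∩ quotaPolyhedron D₂ b₂) x := by
  obtain ⟨x, hx, hmax⟩ := exists_mem_extremePoints_isMaxOn
    ((isCompact_quotaPolyhedron hcover b₁).inter_right (isClosed_quotaPolyhedron D₂ b₂))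
    ⟨0, zero_mem_quotaPolyhedron hb₁, zero_mem_quotaPolyhedron hb₂⟩ l.toContinuousLinearMap
  exact ⟨x, hx.1, hD₁.apply_mem_of_mem_extremePoints hD₂ hG₁ hG₂ hx, hmax⟩

end QuotaPolyhedron

section Market

theorem isMaxOn_apply_of_isMaxOn_sum {ι M : Type*} [Fintype ι] [AddCommMonoid M] [PartialOrder M]
    [IsOrderedCancelAddMonoid M] {β : ι → Type*} {φ : ∀ i, β i → M} {s : ∀ i, Set (β i)}
    {x : ∀ i, β i} (hx : x ∈ Set.univ.pi s)
    (hmax : IsMaxOn (fun y => ∑ i, φ i (y i)) (Set.univ.pi s) x) (i : ι) :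
    IsMaxOn (φ i) (s i) (x i) := by
  classical
  intro y hy
  have hle := hmax (Set.update_mem_pi_iff_of_mem hx |>.2 fun _ => hy)
  simp only [Set.mem_ofPred_eq, ← add_sum_erase univ _ (mem_univ i), Function.update_self] at hle ⊢
  rwa [sum_congr rfl fun j hj => by rw [Function.update_of_ne (ne_of_mem_erase hj)],
    add_le_add_iff_right] at hle

theorem exists_option_eq_ite {ι : Type*} [Fintype ι] [DecidableEq ι] {x : ι → ℝ} (hx : 0 ≤ x)
    (hsum : ∑ i, x i ≤ 1) (hint : ∀ i, ∃ n : ℤ, (n : ℝ) = x i) :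
    ∃ o : Option ι, ∀ i, x i = if o = some i then 1 else 0 := by
  by_cases hzero : ∀ i, x i = 0
  · exact ⟨none, by simpa using hzero⟩
  obtain ⟨i, hi⟩ := not_forall.1 hzero
  have hone : 1 ≤ x i := by
    obtain ⟨n, hn⟩ := hint i
    have hpos : 0 < x i := (hx i).lt_of_ne' hi
    rw [← hn] at hpos ⊢
    exact_mod_cast hpos
  have hsplit := add_sum_erase univ x (mem_univ i)
  have hrest_nonneg : 0 ≤ ∑ j ∈ univ.erase i, x j := sum_nonneg fun j _ => hx j
  have hrest : ∑ j ∈ univ.erase i, x j = 0 := by linarith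
  refine ⟨some i, fun j => ?_⟩
  obtain rfl | hne := eq_or_ne i j
  · rw [if_pos rfl]
    linarith
  · rw [if_neg (by simpa using hne)]
    exact (sum_eq_zero_iff_of_nonneg fun j _ => hx j).1 hrest j
      (mem_erase.2 ⟨hne.symm, mem_univ j⟩)

variable {W F : Type*}

/-- The worker–firm pairs involving the worker `w`. A fractional assignment is a nonnegative vector
indexed by pairs whose sum over each of these sets is at most one. -/
def workerPairs [Fintype F] (w : W) : Finset (W × F) :=
  {w} ×ˢ univ

/-- The worker–firm pairs restricted by the hiring constraint that firm `p.1` faces on the set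
`p.2` of workers. -/
def quotaPairs (ℋ : F → Set (Finset W)) (p : Σ f, ℋ f) : Finset (W × F) :=
  p.2.1 ×ˢ {p.1}

/-- The fractional hiring decisions of all firms that respect their quotas: the relaxation of
`fun f => upperSets (ℋ f) (lam f)`. -/
abbrev firmPolyhedron (ℋ : F → Set (Finset W)) (lam : F → Finset W → ℤ) : Set (W × F → ℝ) :=
  quotaPolyhedron (quotaPairs ℋ) fun p => lam p.1 p.2

/-- The 0-1 vector of worker–firm pairs encoding that each firm `f` hires the set `𝓓 f`. -/
def hiringIndicator [DecidableEq W] (𝓓 : F → Finset W) (e : W × F) : ℝ :=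
  if e.1 ∈ 𝓓 e.2 then 1 else 0

/-- The total value of a fractional assignment, as a linear functional. It is `LPobj` on vectors
indexed by pairs. -/
def fractionalValue [Fintype W] [Fintype F] (α : W → F → ℝ) : (W × F → ℝ) →ₗ[ℝ] ℝ :=
  Fintype.linearCombination ℝ (Function.uncurry α)

theorem fractionalValue_apply [Fintype W] [Fintype F] (α : W → F → ℝ) (y : W × F → ℝ) :
    fractionalValue α y = ∑ w, ∑ f, y (w, f) * α w f := by
  simp [fractionalValue, Fintype.linearCombination_apply, Fintype.sum_prod_type]

theorem fractionalValue_hiringIndicator [Fintype W] [DecidableEq W] [Fintype F]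
    (α : W → F → ℝ) (𝓓 : F → Finset W) :
    fractionalValue α (hiringIndicator 𝓓) = ∑ f, ∑ w ∈ 𝓓 f, α w f := by
  rw [fractionalValue_apply, sum_comm]
  simp [hiringIndicator]

theorem fractionalValue_sub_sum_mul [Fintype W] [Fintype F] (α : W → F → ℝ) (u : W → ℝ)
    (y : W × F → ℝ) :
    fractionalValue α y - ∑ w, u w * (∑ f, y (w, f) - 1) =
      fractionalValue (fun w f => α w f - u w) y + ∑ w, u w := by
  simp only [fractionalValue_apply, mul_sub, sum_sub_distrib, mul_sum, mul_one,
    mul_comm (y _) (u _)]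
  ring

theorem sum_workerPairs [Fintype F] (y : W × F → ℝ) (w : W) :
    ∑ e ∈ workerPairs w, y e = ∑ f, y (w, f) := by
  simp [workerPairs]

theorem sum_quotaPairs (ℋ : F → Set (Finset W)) (p : Σ f, ℋ f) (y : W × F → ℝ) :
    ∑ e ∈ quotaPairs ℋ p, y e = ∑ w ∈ p.2.1, y (w, p.1) := by
  simp [quotaPairs]

theorem laminar_workerPairs [Fintype F] : Laminar (workerPairs : W → Finset (W × F)) := by
  intro w w'
  obtain rfl | hne := eq_or_ne w w'
  · exact .inl subset_rfl
  · exact .inr <| .inr <| disjoint_product.2 <| .inl <| disjoint_singleton.2 hne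

theorem laminar_quotaPairs [DecidableEq W] {ℋ : F → Set (Finset W)} (hℋ : ∀ f, Hierarchy (ℋ f)) :
    Laminar (quotaPairs ℋ) := by
  rintro ⟨f, D, hD⟩ ⟨f', D', hD'⟩
  obtain rfl | hne := eq_or_ne f f'
  · exact ((hℋ f).2 D hD D' hD').imp (product_subset_product_left ·) <|
      Or.imp (product_subset_product_left ·) fun h =>
        disjoint_product.2 <| .inl <| disjoint_iff_inter_eq_empty.2 h
  · exact .inr <| .inr <| disjoint_product.2 <| .inr <| disjoint_singleton.2 hne

theorem hiringIndicator_mem_firmPolyhedron [DecidableEq W] {ℋ : F → Set (Finset W)}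
    {lam : F → Finset W → ℤ} {𝓓 : F → Finset W} :
    hiringIndicator 𝓓 ∈ firmPolyhedron ℋ lam ↔ ∀ f, 𝓓 f ∈ upperSets (ℋ f) (lam f) := by
  have hsum (f : F) (D : Finset W) :
      ∑ w ∈ D, hiringIndicator 𝓓 (w, f) = ((#(𝓓 f ∩ D) : ℤ) : ℝ) := by
    simp [hiringIndicator, inter_comm]
  have hnonneg : 0 ≤ hiringIndicator 𝓓 := fun e => by
    unfold hiringIndicator
    positivity
  simp only [quotaPolyhedron, upperSets, Set.mem_ofPred_eq, hnonneg, true_and, sum_quotaPairs,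
    hsum, Int.cast_le, Sigma.forall, Subtype.forall]

theorem exists_eq_hiringIndicator_assigned [Fintype W] [DecidableEq W] [Fintype F] [DecidableEq F]
    {x : W × F → ℝ} (hx : x ∈ quotaPolyhedron workerPairs 1) (hint : ∀ e, ∃ n : ℤ, (n : ℝ) = x e) :
    ∃ X : W → Option F, x = hiringIndicator (assigned X) := by
  choose X hX using fun w => exists_option_eq_ite (x := fun f => x (w, f)) (fun f => hx.1 _)
    (by simpa [sum_workerPairs] using hx.2 w) fun f => hint _
  exact ⟨X, funext fun e => by simp [hX, hiringIndicator, assigned]⟩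

theorem exists_assignment_isMaxOn [Fintype W] [DecidableEq W] [Fintype F] [DecidableEq F]
    (α : W → F → ℝ) {ℋ : F → Set (Finset W)} {lam : F → Finset W → ℤ}
    (hlam : ∀ f, ∀ D ∈ ℋ f, 0 ≤ lam f D) (hℋ : ∀ f, Hierarchy (ℋ f)) :
    ∃ X : W → Option F,
      hiringIndicator (assigned X) ∈ quotaPolyhedron workerPairs 1 ∩ firmPolyhedron ℋ lam ∧
      IsMaxOn (fractionalValue α) (quotaPolyhedron workerPairs 1 ∩ firmPolyhedron ℋ lam)
        (hiringIndicator (assigned X)) := by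
  obtain ⟨x, hx, hint, hmax⟩ := laminar_workerPairs.exists_isMaxOn_apply_mem
    (laminar_quotaPairs hℋ) (fun e => ⟨e.1, by simp [workerPairs]⟩) (b₁ := 1) zero_le_one
    (b₂ := fun p => (lam p.1 p.2 : ℝ)) (fun p => Int.cast_nonneg (hlam p.1 p.2 p.2.2))
    (G := (Int.castAddHom ℝ).range) (fun _ => ⟨1, by simp⟩) (fun p => ⟨lam p.1 p.2, by simp⟩)
    (fractionalValue α)
  obtain ⟨X, rfl⟩ := exists_eq_hiringIndicator_assigned hx.1 hint
  exact ⟨X, hx, hmax⟩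

theorem exists_prices_isMaxOn [Fintype W] [Fintype F] {α : W → F → ℝ} {Q : Set (W × F → ℝ)}
    (hQ : Convex ℝ Q) (hQ0 : 0 ∈ Q) (hQnonneg : Q ⊆ Set.Ici 0) {x : W × F → ℝ}
    (hx : x ∈ quotaPolyhedron workerPairs 1 ∩ Q)
    (hmax : IsMaxOn (fractionalValue α) (quotaPolyhedron workerPairs 1 ∩ Q) x) :
    ∃ u : W → ℝ, 0 ≤ u ∧ (∀ w, u w * (∑ f, x (w, f) - 1) = 0) ∧
      IsMaxOn (fractionalValue fun w f => α w f - u w) Q x := by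
  have hconvex (w : W) : ConvexOn ℝ Q fun y => ∑ f, y (w, f) - 1 :=
    ⟨hQ, fun y _ z _ p q _ _ hpq => by
      simp only [Pi.add_apply, Pi.smul_apply, smul_eq_mul, sum_add_distrib, ← mul_sum]
      linear_combination hpq⟩
  obtain ⟨u, hu, hslack, hdual⟩ := exists_lagrange_multipliers
    ((fractionalValue α).concaveOn hQ) hconvex ⟨0, hQ0, fun w => by simp⟩ hx.2
    (fun w => by simpa [sum_workerPairs] using hx.1.2 w) fun y hy =>
      hmax ⟨⟨hQnonneg hy.1, fun w => by simpa [sum_workerPairs] using hy.2 w⟩, hy.1⟩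
  refine ⟨u, hu, hslack, fun y hy => ?_⟩
  have hle := hdual y hy
  have hx_value := fractionalValue_sub_sum_mul α u x
  simp only [hslack, sum_const_zero, sub_zero] at hx_value
  rw [fractionalValue_sub_sum_mul, hx_value] at hle
  exact (add_le_add_iff_right _).1 hle

variable [Fintype W] [DecidableEq F]

/-- Competitive equilibrium with worker prices `u`: the assignment is feasible, prices are
nonnegative, unmatched workers have price zero, and every firm is assigned a feasible set maximizing
its value net of prices. Here `v D f` counts the worker values as well, so that `u` is the vector
of worker payoffs. -/
structure IsCompetitive (v : Finset W → F → ℝ) (𝒯 : F → Set (Finset W)) (X : W → Option F)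
    (u : W → ℝ) : Prop where
  rFeasible : RFeasible 𝒯 X
  nonneg : 0 ≤ u
  eq_zero_of_unmatched : ∀ w, X w = none → u w = 0
  isMaxOn : ∀ f, IsMaxOn (fun D => v D f - ∑ w ∈ D, u w) (𝒯 f) (assigned X f)

theorem exists_isCompetitive [DecidableEq W] [Finite F] (α : W → F → ℝ)
    {ℋ : F → Set (Finset W)} {lam : F → Finset W → ℤ} (hlam : ∀ f, ∀ D ∈ ℋ f, 0 ≤ lam f D)
    (hℋ : ∀ f, Hierarchy (ℋ f)) :
    ∃ X u, IsCompetitive (fun D f => ∑ w ∈ D, α w f) (fun f => upperSets (ℋ f) (lam f)) X u := by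
  cases nonempty_fintype F
  obtain ⟨X, hX, hopt⟩ := exists_assignment_isMaxOn α hlam hℋ
  have hzero : 0 ∈ firmPolyhedron ℋ lam :=
    zero_mem_quotaPolyhedron fun p => Int.cast_nonneg (hlam p.1 p.2 p.2.2)
  obtain ⟨u, hu, hslack, hmax⟩ :=
    exists_prices_isMaxOn (convex_quotaPolyhedron _ _) hzero (fun _ hy => hy.1) hX hopt
  have hfeas := hiringIndicator_mem_firmPolyhedron.1 hX.2
  refine ⟨X, u, hfeas, hu, fun w hw => ?_, isMaxOn_apply_of_isMaxOn_sum
    (φ := fun f D => ∑ w ∈ D, α w f - ∑ w ∈ D, u w) (fun f _ => hfeas f) ?_⟩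
  · simpa [hiringIndicator, assigned, hw] using hslack w
  · intro 𝓓 h𝓓
    have hle := hmax (hiringIndicator_mem_firmPolyhedron.2 fun f => h𝓓 f trivial)
    simpa only [Set.mem_ofPred_eq, fractionalValue_hiringIndicator, sum_sub_distrib] using hle

theorem IsCompetitive.workerPayoff_eq {v : Finset W → F → ℝ} {𝒯 : F → Set (Finset W)}
    {X : W → Option F} {u : W → ℝ} (h : IsCompetitive v 𝒯 X u) (a : W → F → ℝ) (w : W) :
    workerPayoff a (fun w f => u w - a w f) X w = u w := by
  rcases hw : X w with _ | f
  · simp [workerPayoff, hw, h.eq_zero_of_unmatched w hw]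
  · simp [workerPayoff, hw]

theorem firmPayoff_sub (a : W → F → ℝ) (b : Finset W → F → ℝ) (X : W → Option F) (u : W → ℝ)
    (f : F) : firmPayoff b (fun w f => u w - a w f) X f =
      ∑ w ∈ assigned X f, a w f + b (assigned X f) f - ∑ w ∈ assigned X f, u w := by
  rw [firmPayoff, sum_sub_distrib]
  ring

theorem IsCompetitive.stable {a : W → F → ℝ} {b : Finset W → F → ℝ} {𝒯 : F → Set (Finset W)}
    {X : W → Option F} {u : W → ℝ}
    (h : IsCompetitive (fun D f => ∑ w ∈ D, a w f + b D f) 𝒯 X u) (hempty : ∀ f, ∅ ∈ 𝒯 f)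
    (hb : ∀ f, 0 ≤ b ∅ f) : Stable a b 𝒯 (fun w f => u w - a w f) X := by
  refine ⟨fun f => .inl (h.rFeasible f), fun w => ?_, fun f => ?_, ?_⟩
  · rw [h.workerPayoff_eq]
    exact h.nonneg w
  · rw [firmPayoff_sub]
    exact (hb f).trans (by simpa using h.isMaxOn f (hempty f))
  · rintro ⟨f, D, hD, r, hworkers, hfirm, hstrict⟩
    simp only [h.workerPayoff_eq, firmPayoff_sub] at hworkers hfirm hstrict
    have hmax : ∑ w ∈ D, a w f + b D f - ∑ w ∈ D, u w ≤ _ := h.isMaxOn f hD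
    have hle := sum_le_sum hworkers
    rw [sum_add_distrib] at hle
    rcases hstrict with ⟨w, hwD, hlt⟩ | hlt
    · have hsum_lt := sum_lt_sum hworkers ⟨w, hwD, hlt⟩
      rw [sum_add_distrib] at hsum_lt
      linarith
    · linarith

end Market

/-- **Existence of stable arrangements under hierarchical constraints.** If firms have
linear preferences and, for each firm `f`, the upper-bound constraint family `ℋ f` is a
hierarchy with nonnegative integer quotas `lam f`, then a stable arrangement exists. -/
theorem stable_exists_of_hierarchy
    {W F : Type*} [Fintype W] [DecidableEq W] [Fintype F] [DecidableEq F]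
    (a c : W → F → ℝ) (ℋ : F → Set (Finset W)) (lam : F → Finset W → ℤ)
    (hpos : ∀ f : F, ∀ D ∈ ℋ f, 0 ≤ lam f D)
    (hhier : ∀ f : F, Hierarchy (ℋ f)) :
    ∃ (X : W → Option F) (s : W → F → ℝ),
      Stable a (fun D f => ∑ w ∈ D, c w f) (fun f => upperSets (ℋ f) (lam f)) s X := by
  obtain ⟨X, u, hcomp⟩ := exists_isCompetitive (fun w f => a w f + c w f) hpos hhier
  simp only [sum_add_distrib] at hcomp
  have hempty (f : F) : ∅ ∈ upperSets (ℋ f) (lam f) := fun D hD => by simpa using hpos f D hD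
  exact ⟨X, fun w f => u w - a w f, hcomp.stable hempty fun _ => by simp⟩

end TwoSidedMatching
end

section
/- Suppose the linear program (LP) — maximize Σ_{w∈W} Σ_{f∈F} α(w,f) x_{w,f} over x ∈ ℝ^{W×F} subject to x ≥ 0, Σ_{f∈F} x_{w,f} ≤ 1 for every worker w, and Σ_{w∈D} x_{w,f} ≤ λ̄_D for every firm f and D ∈ ℋ_f — has an optimal solution X* with X*_{w,f} ∈ {0,1} for all (w,f). Then there exist salaries s : W × F → ℝ such that the arrangement (X*, s) is feasible and individually rational for all workers and firms, and its payoffs u, v satisfy Σ_{w∈D} α(w,f) ≤ Σ_{w∈D} u_w + v_f for every firm f and every feasible set D ∈ 𝒯_f ∪ {∅}; in particular (X*, s) is a stable arrangement. -/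
open Finset

namespace TwoSidedMatching

variable {W F : Type*} [Fintype W] [DecidableEq W] [Fintype F] [DecidableEq F]

/-! An optimal solution of a linear program satisfies complementary slackness with some dual
solution: homogenize the program with one extra variable and apply Farkas' lemma. In the matching
program the dual variables are a price `p w` for each worker and a price `q f D` for each quota.
The salaries `p w - a w f` give each worker the payoff `p w` and each firm the value
`∑ D, q f D * lam f D` of its quotas at these prices. Dual feasibility is then exactly the
coalition inequality, which rules out blocking, and firms are individually rational because the
empty coalition satisfies it. -/

section LinearProgramming

variable {ι K V : Type*} [Field K] [AddCommGroup V] [Module K V]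

/-- Elimination, as in the Fourier–Motzkin method: the functional `ψ` minus the multiple of `γ`
that makes it vanish at `u`. Meaningful only if `γ u ≠ 0`. -/
def eliminate (γ : Module.Dual K V) (u : V) (ψ : Module.Dual K V) : Module.Dual K V :=
  ψ - (ψ u / γ u) • γ

theorem eliminate_apply (γ : Module.Dual K V) (u : V) (ψ : Module.Dual K V) (v : V) :
    eliminate γ u ψ v = ψ (v - (γ v / γ u) • u) := by
  simp only [eliminate, LinearMap.sub_apply, LinearMap.smul_apply, smul_eq_mul, map_sub, map_smul]
  ring

variable [LinearOrder K] [IsStrictOrderedRing K]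

theorem mem_hull_insert_of_eliminate_mem_hull {s : Set (Module.Dual K V)}
    {γ φ : Module.Dual K V} {u : V} (hγ : γ u < 0) (hs : ∀ ψ ∈ s, 0 ≤ ψ u) (hφ : φ u ≤ 0)
    (h : eliminate γ u φ ∈ PointedCone.hull K (eliminate γ u '' s)) :
    φ ∈ PointedCone.hull K (insert γ s) := by
  have hsmul {r : K} (hr : 0 ≤ r) : r • γ ∈ PointedCone.hull K (insert γ s) :=
    PointedCone.smul_mem _ hr (PointedCone.subset_hull (Set.mem_insert γ s))
  have hle : PointedCone.hull K (eliminate γ u '' s) ≤ PointedCone.hull K (insert γ s) := by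
    refine Submodule.span_le.2 (Set.image_subset_iff.2 fun ψ hψ => ?_)
    have hcoeff : 0 ≤ -(ψ u / γ u) :=
      neg_nonneg.2 (div_nonpos_of_nonneg_of_nonpos (hs ψ hψ) hγ.le)
    have helim : eliminate γ u ψ = ψ + (-(ψ u / γ u)) • γ :=
      LinearMap.ext fun v => by simp [eliminate, sub_eq_add_neg]
    rw [Set.mem_preimage, helim]
    exact add_mem (PointedCone.subset_hull (Set.mem_insert_of_mem γ hψ)) (hsmul hcoeff)
  simpa only [eliminate, sub_add_cancel] using
    add_mem (hle h) (hsmul (div_nonneg_of_nonpos hφ hγ.le))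

theorem mem_hull_image_of_forall_nonneg (t : Finset ι) (g : ι → Module.Dual K V)
    (φ : Module.Dual K V) (h : ∀ v, (∀ i ∈ t, 0 ≤ g i v) → 0 ≤ φ v) :
    φ ∈ PointedCone.hull K (g '' t) := by
  classical
  induction t using Finset.induction_on generalizing g φ with
  | empty =>
    have hφ : φ = 0 := LinearMap.ext fun v =>
      le_antisymm (by simpa using h (-v) (by simp)) (h v (by simp))
    exact hφ ▸ zero_mem _
  | insert j t _ ih =>
    rw [coe_insert, Set.image_insert_eq]
    by_cases ht : ∀ v, (∀ i ∈ t, 0 ≤ g i v) → 0 ≤ φ v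
    · exact Submodule.span_mono (Set.subset_insert _ _) (ih g φ ht)
    push Not at ht
    obtain ⟨u, hgu, hφu⟩ := ht
    have hju : g j u < 0 := by
      by_contra! hju
      exact hφu.not_ge (h u (by simpa using ⟨hju, hgu⟩))
    refine mem_hull_insert_of_eliminate_mem_hull hju (Set.forall_mem_image.2 hgu) hφu.le ?_
    rw [Set.image_image]
    -- The eliminated functionals at `v` are the original ones at the point of `v + K u` where
    -- `g j` vanishes, so there the constraint `j` holds for free.
    refine ih _ _ fun v hv => ?_
    simp only [eliminate_apply] at hv ⊢
    refine h _ fun i hi => ?_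
    rcases Finset.mem_insert.1 hi with rfl | hi
    · simp [hju.ne]
    · exact hv i hi

theorem apply_le_mul_of_forall_le_mul {g : ι → Module.Dual K V} {β : ι → K}
    {φ : Module.Dual K V} {x : V} (hx : ∀ i, g i x ≤ β i)
    (hopt : ∀ z, (∀ i, g i z ≤ β i) → φ z ≤ φ x) {v : V} {τ : K} (hτ : 0 ≤ τ)
    (hv : ∀ i, g i v ≤ τ * β i) : φ v ≤ τ * φ x := by
  have hτ' : 0 < τ + 1 := by positivity
  -- Adding `(x, 1)` to `(v, τ)` makes the division possible even if `τ = 0`.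
  have hz : φ ((τ + 1)⁻¹ • (v + x)) ≤ φ x := hopt _ fun i => by
    rw [map_smul, smul_eq_mul, map_add, inv_mul_le_iff₀ hτ']
    linarith [hv i, hx i]
  rw [map_smul, smul_eq_mul, map_add, inv_mul_le_iff₀ hτ'] at hz
  linarith

theorem exists_complementary_multipliers [Fintype ι] {g : ι → Module.Dual K V} {β : ι → K}
    {φ : Module.Dual K V} {x : V} (hx : ∀ i, g i x ≤ β i)
    (hopt : ∀ z, (∀ i, g i z ≤ β i) → φ z ≤ φ x) :
    ∃ y : ι → K, (∀ i, 0 ≤ y i) ∧ (∀ i, y i ≠ 0 → g i x = β i) ∧ φ = ∑ i, y i • g i := by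
  let fst : V × K →ₗ[K] V := LinearMap.fst K V K
  let snd : V × K →ₗ[K] K := LinearMap.snd K V K
  let G : Option ι → Module.Dual K (V × K) :=
    fun o => o.elim snd fun i => β i • snd - g i ∘ₗ fst
  have hmem := mem_hull_image_of_forall_nonneg univ G (φ x • snd - φ ∘ₗ fst) fun v hv => by
    have hτ : 0 ≤ v.2 := hv none (mem_univ _)
    have := apply_le_mul_of_forall_le_mul hx hopt hτ fun i => by
      simpa [G, fst, snd, mul_comm] using hv (some i) (mem_univ _)
    simpa [fst, snd, mul_comm] using this
  rw [coe_univ, Set.image_univ, Submodule.mem_span_range_iff_exists_fun] at hmem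
  obtain ⟨y, hy⟩ := hmem
  have hcomb (v : V) (τ : K) :
      y none * τ + ∑ i, y (some i) * (β i * τ - g i v) = φ x * τ - φ v := by
    simpa [G, fst, snd, ← Nonneg.coe_smul] using LinearMap.congr_fun hy (v, τ)
  have hslack_nonneg (i : ι) : 0 ≤ (y (some i) : K) * (β i - g i x) :=
    mul_nonneg (y (some i)).2 (sub_nonneg.2 (hx i))
  have hslack_sum : ∑ i, (y (some i) : K) * (β i - g i x) = 0 := by
    have := hcomb x 1
    simp only [mul_one, sub_self] at this
    exact le_antisymm (by linarith [(y none).2]) (sum_nonneg fun i _ => hslack_nonneg i)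
  refine ⟨fun i => y (some i), fun i => (y (some i)).2, fun i hi => ?_, LinearMap.ext fun v => ?_⟩
  · have := (sum_eq_zero_iff_of_nonneg fun i _ => hslack_nonneg i).1 hslack_sum i (mem_univ i)
    linarith [(mul_eq_zero.1 this).resolve_left hi]
  · simpa [-Nonneg.coe_smul] using (hcomb v 0).symm

end LinearProgramming

section DualPrices

variable {W F : Type*}

/-- The total price of the quotas in `ℋ` whose set contains a worker, at quota prices `q`. -/
def quotaCharge [DecidableEq W] {ℋ : Set (Finset W)} [Fintype ℋ] (q : ℋ → ℝ) (w : W) : ℝ :=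
  ∑ D : ℋ with w ∈ D.1, q D

theorem sum_quotaCharge [DecidableEq W] {ℋ : Set (Finset W)} [Fintype ℋ] (q : ℋ → ℝ)
    (E : Finset W) : ∑ w ∈ E, quotaCharge q w = ∑ D : ℋ, q D * (#(E ∩ D.1) : ℝ) := by
  simp only [quotaCharge, sum_filter]
  rw [sum_comm]
  refine sum_congr rfl fun D _ => ?_
  rw [← sum_filter, filter_mem_eq_inter, sum_const, nsmul_eq_mul, mul_comm]

/-- Dual variables of the matching LP, `p` for the unit constraints of the workers and `q` for
the quotas, that are feasible for the dual LP and satisfy complementary slackness with `x`. -/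
structure IsDualCertificate [DecidableEq W] [Fintype F] {ℋ : F → Set (Finset W)}
    [∀ f, Fintype (ℋ f)] (α : W → F → ℝ) (lam : F → Finset W → ℤ) (x : W → F → ℝ)
    (p : W → ℝ) (q : ∀ f, ℋ f → ℝ) : Prop where
  worker_nonneg : ∀ w, 0 ≤ p w
  quota_nonneg : ∀ f D, 0 ≤ q f D
  value_le : ∀ w f, α w f ≤ p w + quotaCharge (q f) w
  worker_tight : ∀ w, p w ≠ 0 → ∑ f, x w f = 1
  quota_tight : ∀ f D, q f D ≠ 0 → ∑ w ∈ D.1, x w f = lam f D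
  value_eq : ∀ w f, x w f ≠ 0 → α w f = p w + quotaCharge (q f) w

/-- Index type of the constraints of the matching LP: sign constraints, unit constraints of the
workers, and quotas. -/
abbrev LPConstraint (ℋ : F → Set (Finset W)) : Type _ :=
  (W × F) ⊕ W ⊕ (Σ f, ℋ f)

/-- The coordinate functional `x ↦ x w f`. -/
def entry (w : W) (f : F) : Module.Dual ℝ (W → F → ℝ) :=
  LinearMap.proj f ∘ₗ LinearMap.proj w

@[simp]
theorem entry_apply (w : W) (f : F) (x : W → F → ℝ) : entry w f x = x w f :=
  rfl

/-- The left-hand sides of the constraints of the matching LP, all written in the form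
`lpLHS ≤ lpRHS`. -/
def lpLHS [Fintype F] (ℋ : F → Set (Finset W)) :
    LPConstraint ℋ → Module.Dual ℝ (W → F → ℝ)
  | .inl (w, f) => -entry w f
  | .inr (.inl w) => ∑ f, entry w f
  | .inr (.inr ⟨f, D⟩) => ∑ w ∈ D.1, entry w f

/-- The right-hand sides of the constraints of the matching LP. -/
def lpRHS (ℋ : F → Set (Finset W)) (lam : F → Finset W → ℤ) : LPConstraint ℋ → ℝ
  | .inl _ => 0
  | .inr (.inl _) => 1
  | .inr (.inr ⟨f, D⟩) => lam f D

theorem forall_lpLHS_le_lpRHS_iff [Fintype F] {ℋ : F → Set (Finset W)}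
    {lam : F → Finset W → ℤ} {x : W → F → ℝ} :
    (∀ i, lpLHS ℋ i x ≤ lpRHS ℋ lam i) ↔ LPFeasible ℋ lam x := by
  simp [lpLHS, lpRHS, LPFeasible, Sigma.forall]

/-- The objective of the matching LP as a linear functional. -/
def lpObjective [Fintype W] [Fintype F] (α : W → F → ℝ) : Module.Dual ℝ (W → F → ℝ) :=
  ∑ w, ∑ f, α w f • entry w f

theorem lpObjective_apply [Fintype W] [Fintype F] (α x : W → F → ℝ) :
    lpObjective α x = LPobj α x := by
  simp [lpObjective, LPobj]

theorem lpObjective_single [Fintype W] [Fintype F] [DecidableEq W] [DecidableEq F]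
    (α : W → F → ℝ) (w : W) (f : F) :
    lpObjective α (Pi.single w (Pi.single f 1)) = α w f := by
  simp [lpObjective, Pi.single_apply, ite_apply]

theorem sum_mul_lpLHS_single [Fintype W] [Fintype F] [DecidableEq W] [DecidableEq F]
    {ℋ : F → Set (Finset W)} [∀ f, Fintype (ℋ f)] (y : LPConstraint ℋ → ℝ) (w : W) (f : F) :
    ∑ i, y i * lpLHS ℋ i (Pi.single w (Pi.single f 1)) =
      -y (.inl (w, f)) + (y (.inr (.inl w)) +
        quotaCharge (fun D => y (.inr (.inr ⟨f, D⟩))) w) := by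
  have hquota : ∑ k : Σ f, ℋ f, y (.inr (.inr k)) *
      lpLHS ℋ (.inr (.inr k)) (Pi.single w (Pi.single f 1)) =
        quotaCharge (fun D => y (.inr (.inr ⟨f, D⟩))) w := by
    rw [Fintype.sum_sigma, Fintype.sum_eq_single f fun f' hf' => ?_]
    · simp [lpLHS, quotaCharge, Pi.single_apply, ite_apply, sum_filter]
    · simp [lpLHS, Pi.single_apply, ite_apply, hf']
  rw [Fintype.sum_sum_type, Fintype.sum_sum_type, hquota]
  simp [lpLHS, Pi.single_apply, ite_apply, Fintype.sum_prod_type]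

theorem exists_isDualCertificate [Fintype W] [DecidableEq W] [Fintype F]
    {ℋ : F → Set (Finset W)} [∀ f, Fintype (ℋ f)] {α : W → F → ℝ} {lam : F → Finset W → ℤ}
    {x : W → F → ℝ} (hfeas : LPFeasible ℋ lam x)
    (hopt : ∀ y, LPFeasible ℋ lam y → LPobj α y ≤ LPobj α x) :
    ∃ (p : W → ℝ) (q : ∀ f, ℋ f → ℝ), IsDualCertificate α lam x p q := by
  classical
  obtain ⟨y, hy, htight, hdual⟩ :=
    exists_complementary_multipliers (φ := lpObjective α) (forall_lpLHS_le_lpRHS_iff.2 hfeas)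
      fun z hz => by
        simpa only [lpObjective_apply] using hopt z (forall_lpLHS_le_lpRHS_iff.1 hz)
  have hvalue (w : W) (f : F) := calc
    α w f = ∑ i, y i * lpLHS ℋ i (Pi.single w (Pi.single f 1)) := by
      rw [← lpObjective_single α w f, hdual]
      simp only [LinearMap.sum_apply, LinearMap.smul_apply, smul_eq_mul]
    _ = _ := sum_mul_lpLHS_single y w f
  exact ⟨fun w => y (.inr (.inl w)), fun f D => y (.inr (.inr ⟨f, D⟩)),
    { worker_nonneg := fun w => hy _
      quota_nonneg := fun f D => hy _
      value_le := fun w f => by linarith [hvalue w f, hy (.inl (w, f))]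
      worker_tight := fun w hw => by simpa [lpLHS, lpRHS] using htight _ hw
      quota_tight := fun f D hD => by simpa [lpLHS, lpRHS] using htight _ hD
      value_eq := fun w f hwf => by
        have hsign : y (.inl (w, f)) = 0 := by
          by_contra hne
          exact hwf (by simpa [lpLHS, lpRHS] using htight _ hne)
        linarith [hvalue w f] }⟩

end DualPrices

section IntegralSolutions

variable {W F : Type*}

/-- The 0-1 solution of the matching LP that represents the assignment `X`. -/
def incidence [DecidableEq F] (X : W → Option F) (w : W) (f : F) : ℝ :=
  if X w = some f then 1 else 0

theorem incidence_eq_one_iff [DecidableEq F] {X : W → Option F} {w : W} {f : F} :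
    incidence X w f = 1 ↔ X w = some f := by
  simp [incidence]

theorem exists_eq_incidence [Fintype F] [DecidableEq F] {x : W → F → ℝ} (hx : ∀ w, ∑ f, x w f ≤ 1)
    (h01 : ∀ w f, x w f = 0 ∨ x w f = 1) : ∃ X, x = incidence X := by
  have hrow (w : W) : ∃ o : Option F, ∀ f, x w f = if o = some f then 1 else 0 := by
    by_cases hw : ∃ f, x w f = 1
    · obtain ⟨f, hf⟩ := hw
      refine ⟨some f, fun f' => ?_⟩
      rcases eq_or_ne f f' with rfl | hne
      · simpa using hf
      have hnonneg (g : F) : 0 ≤ x w g := by rcases h01 w g with h | h <;> simp [h]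
      have hpair := add_le_sum (fun g _ => hnonneg g) (mem_univ f) (mem_univ f') hne
      simpa [hne] using (h01 w f').resolve_right fun hf' => by linarith [hx w]
    · exact ⟨none, fun f => by simpa using (h01 w f).resolve_right fun hf => hw ⟨f, hf⟩⟩
  choose X hX using hrow
  exact ⟨X, funext₂ hX⟩

theorem sum_incidence [Fintype W] [DecidableEq W] [DecidableEq F] (X : W → Option F)
    (f : F) (D : Finset W) :
    ∑ w ∈ D, incidence X w f = #(assigned X f ∩ D) := by
  simp only [incidence, sum_boole, assigned, filter_inter, univ_inter]

theorem RFeasible.feasible [Fintype W] [DecidableEq F] {𝒯 : F → Set (Finset W)}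
    {X : W → Option F} (h : RFeasible 𝒯 X) : Feasible 𝒯 X :=
  fun f => .inl (h f)

theorem rFeasible_of_lpFeasible_incidence [Fintype W] [DecidableEq W] [Fintype F]
    [DecidableEq F] {ℋ : F → Set (Finset W)} {lam : F → Finset W → ℤ}
    {X : W → Option F} (h : LPFeasible ℋ lam (incidence X)) :
    RFeasible (fun f => upperSets (ℋ f) (lam f)) X := fun f D hD => by
  have hquota := h.2.2 f D hD
  rw [sum_incidence] at hquota
  exact_mod_cast hquota

theorem empty_mem_upperSets [DecidableEq W] {ℋ : Set (Finset W)} {lam : Finset W → ℤ}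
    (h : ∀ D ∈ ℋ, 0 ≤ lam D) : ∅ ∈ upperSets ℋ lam := fun D hD => by
  simpa using h D hD

end IntegralSolutions

section Salaries

variable {W F : Type*}

/-- The salaries that give every worker `w` the payoff `p w` at whichever firm she works. -/
def priceSalary (a : W → F → ℝ) (p : W → ℝ) (w : W) (f : F) : ℝ :=
  p w - a w f

theorem workerPayoff_priceSalary (a : W → F → ℝ) {p : W → ℝ} {X : W → Option F}
    (h : ∀ w, X w = none → p w = 0) (w : W) : workerPayoff a (priceSalary a p) X w = p w := by
  cases hw : X w with
  | some f => simp [workerPayoff, priceSalary, hw]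
  | none => simp [workerPayoff, hw, h w hw]

theorem firmPayoff_priceSalary [Fintype W] [DecidableEq F] (a c : W → F → ℝ) (p : W → ℝ)
    (X : W → Option F) (f : F) :
    firmPayoff (fun D f => ∑ w ∈ D, c w f) (priceSalary a p) X f =
      ∑ w ∈ assigned X f, (a w f + c w f) - ∑ w ∈ assigned X f, p w := by
  simp only [firmPayoff, priceSalary, ← sum_sub_distrib]
  exact sum_congr rfl fun w _ => by ring

theorem not_blocks_of_sum_le [Fintype W] [DecidableEq F] {a : W → F → ℝ}
    {b : Finset W → F → ℝ} {𝒯 : F → Set (Finset W)} {s : W → F → ℝ} {X : W → Option F}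
    (h : ∀ f, ∀ D ∈ 𝒯 f, ∑ w ∈ D, a w f + b D f ≤
      ∑ w ∈ D, workerPayoff a s X w + firmPayoff b s X f) : ¬ Blocks a b 𝒯 s X := by
  rintro ⟨f, D, hD, r, hworkers, hfirm, hstrict⟩
  have hle := h f D hD
  rcases hstrict with hworker | hfirm_lt
  · have hsum := sum_lt_sum hworkers hworker
    rw [sum_add_distrib] at hsum
    linarith
  · have hsum := sum_le_sum hworkers
    rw [sum_add_distrib] at hsum
    linarith

end Salaries

namespace IsDualCertificate

variable {W F : Type*} [DecidableEq W] [Fintype F] {ℋ : F → Set (Finset W)}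
  [∀ f, Fintype (ℋ f)] {α : W → F → ℝ} {lam : F → Finset W → ℤ} {p : W → ℝ} {q : ∀ f, ℋ f → ℝ}

theorem sum_value_le {x : W → F → ℝ} (h : IsDualCertificate α lam x p q) {f : F}
    {D : Finset W} (hD : D ∈ upperSets (ℋ f) (lam f)) :
    ∑ w ∈ D, α w f ≤ ∑ w ∈ D, p w + ∑ D', q f D' * lam f D' := by
  calc ∑ w ∈ D, α w f ≤ ∑ w ∈ D, (p w + quotaCharge (q f) w) :=
        sum_le_sum fun w _ => h.value_le w f
    _ = ∑ w ∈ D, p w + ∑ D', q f D' * (#(D ∩ D'.1) : ℝ) := by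
        rw [sum_add_distrib, sum_quotaCharge]
    _ ≤ ∑ w ∈ D, p w + ∑ D', q f D' * lam f D' := by
        gcongr with D'
        · exact h.quota_nonneg f D'
        · exact_mod_cast hD D' D'.2

theorem sum_value_assigned [Fintype W] [DecidableEq F] {X : W → Option F}
    (h : IsDualCertificate α lam (incidence X) p q) (f : F) :
    ∑ w ∈ assigned X f, α w f = ∑ w ∈ assigned X f, p w + ∑ D, q f D * lam f D := by
  calc ∑ w ∈ assigned X f, α w f = ∑ w ∈ assigned X f, (p w + quotaCharge (q f) w) := by
        refine sum_congr rfl fun w hw => h.value_eq w f ?_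
        have hwf : X w = some f := by simpa [assigned] using hw
        simp [incidence, hwf]
    _ = ∑ w ∈ assigned X f, p w + ∑ D, q f D * (#(assigned X f ∩ D.1) : ℝ) := by
        rw [sum_add_distrib, sum_quotaCharge]
    _ = ∑ w ∈ assigned X f, p w + ∑ D, q f D * lam f D := by
        congr 1
        refine sum_congr rfl fun D _ => ?_
        rcases eq_or_ne (q f D) 0 with hq | hq
        · simp [hq]
        · rw [← h.quota_tight f D hq, sum_incidence]

theorem workerPayoff_eq [DecidableEq F] {X : W → Option F}
    (h : IsDualCertificate α lam (incidence X) p q) (a : W → F → ℝ) (w : W) :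
    workerPayoff a (priceSalary a p) X w = p w := by
  refine workerPayoff_priceSalary a (fun w hw => ?_) w
  by_contra hp
  simpa [incidence, hw] using h.worker_tight w hp

theorem sum_value_le_payoffs [Fintype W] [DecidableEq F] {a c : W → F → ℝ} {X : W → Option F}
    (h : IsDualCertificate (fun w f => a w f + c w f) lam (incidence X) p q) {f : F}
    {D : Finset W} (hD : D ∈ upperSets (ℋ f) (lam f)) :
    ∑ w ∈ D, (a w f + c w f) ≤ ∑ w ∈ D, workerPayoff a (priceSalary a p) X w +
      firmPayoff (fun D f => ∑ w ∈ D, c w f) (priceSalary a p) X f := by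
  simp only [h.workerPayoff_eq, firmPayoff_priceSalary, h.sum_value_assigned f,
    add_sub_cancel_left]
  exact h.sum_value_le hD

end IsDualCertificate

/-- **Duality and stable arrangements.** If the matching LP with upper-bound constraints
has an integral optimal solution `x`, then there are salaries `s` such that the induced
arrangement `(X*, s)` is feasible, individually rational for all workers and firms,
satisfies `Σ_{w∈D} α w f ≤ Σ_{w∈D} u w + v f` for every firm `f` and `D ∈ 𝒯 f ∪ {∅}`,
and in particular is stable. -/
theorem duality_gives_stable_arrangement
    {W F : Type*} [Fintype W] [DecidableEq W] [Fintype F] [DecidableEq F]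
    (a c : W → F → ℝ) (ℋ : F → Set (Finset W)) (lam : F → Finset W → ℤ)
    (hpos : ∀ f : F, ∀ D ∈ ℋ f, 0 ≤ lam f D)
    (x : W → F → ℝ)
    (hfeas : LPFeasible ℋ lam x)
    (hopt : ∀ y : W → F → ℝ, LPFeasible ℋ lam y →
      LPobj (fun w f => a w f + c w f) y ≤ LPobj (fun w f => a w f + c w f) x)
    (h01 : ∀ w f, x w f = 0 ∨ x w f = 1) :
    ∃ (X : W → Option F) (s : W → F → ℝ),
      (∀ w f, X w = some f ↔ x w f = 1) ∧
      Feasible (fun f => upperSets (ℋ f) (lam f)) X ∧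
      (∀ w, 0 ≤ workerPayoff a s X w) ∧
      (∀ f, 0 ≤ firmPayoff (fun D f' => ∑ w ∈ D, c w f') s X f) ∧
      (∀ f : F, ∀ D : Finset W, D ∈ upperSets (ℋ f) (lam f) ∨ D = ∅ →
        ∑ w ∈ D, (a w f + c w f) ≤
          (∑ w ∈ D, workerPayoff a s X w) +
            firmPayoff (fun D' f' => ∑ w ∈ D', c w f') s X f) ∧
      Stable a (fun D f => ∑ w ∈ D, c w f) (fun f => upperSets (ℋ f) (lam f)) s X := by
  classical
  obtain ⟨X, rfl⟩ := exists_eq_incidence hfeas.2.1 h01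
  obtain ⟨p, q, hdual⟩ := exists_isDualCertificate hfeas hopt
  have hX := (rFeasible_of_lpFeasible_incidence hfeas).feasible
  have hworker (w : W) : 0 ≤ workerPayoff a (priceSalary a p) X w :=
    (hdual.worker_nonneg w).trans_eq (hdual.workerPayoff_eq a w).symm
  have hcoalition (f : F) (D : Finset W) (hD : D ∈ upperSets (ℋ f) (lam f) ∨ D = ∅) :=
    hdual.sum_value_le_payoffs (hD.elim id fun h => h ▸ empty_mem_upperSets (hpos f))
  have hfirm (f : F) :
      0 ≤ firmPayoff (fun D f' => ∑ w ∈ D, c w f') (priceSalary a p) X f := by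
    simpa using hcoalition f ∅ (.inr rfl)
  refine ⟨X, priceSalary a p, fun w f => incidence_eq_one_iff.symm, hX, hworker, hfirm,
    hcoalition, hX, hworker, hfirm, not_blocks_of_sum_le fun f D hD => ?_⟩
  simpa only [sum_add_distrib] using hcoalition f D (.inl hD)

end TwoSidedMatching
end
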